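/- For every nonnegative integer a, the number of plane partitions contained in a 2a×2a×2a box which are both cyclically symmetric and self-complementary equals the square of the number of plane partitions contained in that box which are both totally symmetric and self-complementary. (Equation (1.4): CSSC(2a,2a,2a) = TSSC(2a,2a,2a)².) -/

import Mathlib

/-- The transpose of (the diagram of) a plane partition contained in an `a × a × c` box:
`(i,j,k)` is in the transpose iff `(j,i,k)` is in `T`. -/
def ppTranspose {a c : ℕ} (T : Set (Fin a × Fin a × Fin c)) : Set (Fin a × Fin a × Fin c) :=
  {x | (x.2.1, x.1, x.2.2) ∈ T}

/-- The cyclic shift of (the diagram of) a plane partition contained in an `n × n × n` box: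
`(i,j,k)` is in the shift iff `(j,k,i)` is in `T`.  `T` is cyclically symmetric iff it equals
its cyclic shift. -/
def ppCycle {n : ℕ} (T : Set (Fin n × Fin n × Fin n)) : Set (Fin n × Fin n × Fin n) :=
  {x | (x.2.1, x.2.2, x.1) ∈ T}

/-- The complement of (the diagram of) a plane partition contained in an `a × b × c` box:
`(i,j,k)` is in the complement iff `(a-1-i, b-1-j, c-1-k)` is not in `T`. -/
def ppComplement {a b c : ℕ} (T : Set (Fin a × Fin b × Fin c)) : Set (Fin a × Fin b × Fin c) :=
  {x | (x.1.rev, x.2.1.rev, x.2.2.rev) ∉ T}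

namespace CSSC
open Finset

/-- unnormalised Pfaffian -/
def pf {κ : Type*} [Fintype κ] [DecidableEq κ] (M : Matrix (κ ⊕ κ) (κ ⊕ κ) ℚ) : ℚ :=
  ∑ σ : Equiv.Perm (κ ⊕ κ), ((Equiv.Perm.sign σ : ℤ) : ℚ) *
    ∏ k : κ, M (σ (Sum.inl k)) (σ (Sum.inr k))

section
variable {κ : Type*} [Fintype κ] [DecidableEq κ]

theorem sum_sign_eq_zero {ι : Type*} [Fintype ι] [DecidableEq ι] (F : Equiv.Perm ι → ℚ) (x y : ι) (hxy : x ≠ y)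
    (h : ∀ σ, F (σ * Equiv.swap x y) = F σ) :
    ∑ σ : Equiv.Perm ι, ((Equiv.Perm.sign σ : ℤ) : ℚ) * F σ = 0 := by
  have h1 : ∑ σ : Equiv.Perm ι, ((Equiv.Perm.sign σ : ℤ) : ℚ) * F σ
      = ∑ σ : Equiv.Perm ι, ((Equiv.Perm.sign (σ * Equiv.swap x y) : ℤ) : ℚ) * F (σ * Equiv.swap x y) :=
    (Equiv.sum_comp (Equiv.mulRight (Equiv.swap x y))
      (fun σ => ((Equiv.Perm.sign σ : ℤ) : ℚ) * F σ)).symm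
  have h2 : ∀ σ : Equiv.Perm ι, ((Equiv.Perm.sign (σ * Equiv.swap x y) : ℤ) : ℚ) * F (σ * Equiv.swap x y)
      = - (((Equiv.Perm.sign σ : ℤ) : ℚ) * F σ) := by
    intro σ
    rw [h, Equiv.Perm.sign_mul, Equiv.Perm.sign_swap hxy]
    simp
  simp only [h2, Finset.sum_neg_distrib] at h1
  linarith

theorem pf_skew_congr (M M' : Matrix (κ ⊕ κ) (κ ⊕ κ) ℚ)
    (h : ∀ x y, M x y - M y x = M' x y - M' y x) : pf M = pf M' := by
  obtain ⟨Y, hY⟩ : ∃ Y : Matrix (κ ⊕ κ) (κ ⊕ κ) ℚ, Y = M - M' := ⟨_, rfl⟩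
  have hs : ∀ x y, Y x y = Y y x := by
    intro x y; have := h x y; simp only [hY, Matrix.sub_apply]; linarith
  have hM : ∀ x y, M x y = Y x y + M' x y := by intro x y; simp [hY]
  unfold pf
  simp only [hM, Finset.prod_add, Finset.mul_sum]
  rw [Finset.sum_comm]
  rw [Finset.sum_eq_single ∅]
  · simp
  · intro t _ ht
    obtain ⟨k0, hk0⟩ := Finset.nonempty_iff_ne_empty.mpr ht
    apply sum_sign_eq_zero _ (Sum.inl k0) (Sum.inr k0) (by simp)
    intro σ
    congr 1
    · apply Finset.prod_congr rfl
      intro k _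
      by_cases hk : k = k0
      · subst hk
        simp only [Equiv.Perm.mul_apply, Equiv.swap_apply_left, Equiv.swap_apply_right]
        exact hs _ _
      · simp only [Equiv.Perm.mul_apply]
        rw [Equiv.swap_apply_of_ne_of_ne (by simpa using hk) (by simp),
          Equiv.swap_apply_of_ne_of_ne (by simp) (by simpa using hk)]
    · apply Finset.prod_congr rfl
      intro k hk
      have hk : k ≠ k0 := by rintro rfl; simp [hk0] at hk
      simp only [Equiv.Perm.mul_apply]
      rw [Equiv.swap_apply_of_ne_of_ne (by simpa using hk) (by simp),
          Equiv.swap_apply_of_ne_of_ne (by simp) (by simpa using hk)]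
  · simp

theorem det_sub_eq {ι : Type*} [Fintype ι] [DecidableEq ι] (P : Matrix ι ι ℚ) (f : ι → ι)
    (hf : ¬ Function.Bijective f) : (P.submatrix id f).det = 0 := by
  have : ¬ Function.Injective f := fun h => hf (Finite.injective_iff_bijective.mp h)
  simp only [Function.Injective, not_forall] at this
  obtain ⟨x, y, hxy, hne⟩ := this
  exact Matrix.det_zero_of_column_eq hne (fun k => by simp [hxy])

/-- sum over functions weighted by an alternating thing equals sum over perms -/
theorem sum_fun_det {ι : Type*} [Fintype ι] [DecidableEq ι] (P : Matrix ι ι ℚ) (F : (ι → ι) → ℚ) :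
    ∑ f : ι → ι, F f * (P.submatrix id f).det
      = P.det * ∑ σ : Equiv.Perm ι, ((Equiv.Perm.sign σ : ℤ) : ℚ) * F σ := by
  classical
  rw [← Finset.sum_filter_of_ne (p := Function.Bijective)]
  swap
  · intro f _ h
    by_contra hf
    exact h (by rw [det_sub_eq P f hf, mul_zero])
  rw [Finset.mul_sum]
  refine (Finset.sum_bij (fun (σ : Equiv.Perm ι) _ => (σ : ι → ι)) ?_ ?_ ?_ ?_).symm
  · intro σ _; simp
  · intro σ _ τ _ h; exact Equiv.coe_fn_injective h
  · intro f hf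
    simp only [Finset.mem_filter, Finset.mem_univ, true_and] at hf
    exact ⟨Equiv.ofBijective f hf, Finset.mem_univ _, rfl⟩
  · intro σ _
    rw [Matrix.det_permute']
    ring

theorem pf_conj (P M : Matrix (κ ⊕ κ) (κ ⊕ κ) ℚ) :
    pf (P * M * P.transpose) = P.det * pf M := by
  have h := sum_fun_det P (fun f => ∏ k : κ, M (f (Sum.inl k)) (f (Sum.inr k)))
  unfold pf
  rw [← h]
  have e : ∀ x y, (P * M * P.transpose) x y = ∑ pq : (κ ⊕ κ) × (κ ⊕ κ), P x pq.1 * M pq.1 pq.2 * P y pq.2 := by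
    intro x y
    simp only [Matrix.mul_apply, Matrix.transpose_apply, Fintype.sum_prod_type, Finset.sum_mul]
    rw [Finset.sum_comm]
  simp only [e, Finset.prod_univ_sum, Finset.mul_sum, Matrix.det_apply, Fintype.piFinset_univ]
  rw [Finset.sum_comm]
  let E : (κ ⊕ κ → κ ⊕ κ) ≃ (κ → (κ ⊕ κ) × (κ ⊕ κ)) :=
    (Equiv.sumArrowEquivProdArrow κ κ (κ ⊕ κ)).trans (Equiv.arrowProdEquivProdArrow κ (fun _ => κ ⊕ κ) (fun _ => κ ⊕ κ)).symm
  rw [← Equiv.sum_comp E]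
  apply Finset.sum_congr rfl
  intro f _
  apply Finset.sum_congr rfl
  intro σ _
  have e1 : ∀ k, (E f k).1 = f (Sum.inl k) := fun k => rfl
  have e2 : ∀ k, (E f k).2 = f (Sum.inr k) := fun k => rfl
  simp only [e1, e2, Matrix.submatrix_apply, id, Finset.prod_mul_distrib, Fintype.prod_sum_type, Units.smul_def, zsmul_eq_mul]
  ring

theorem pf_perm (M : Matrix (κ ⊕ κ) (κ ⊕ κ) ℚ) (π : Equiv.Perm (κ ⊕ κ)) :
    pf (M.submatrix π π) = ((Equiv.Perm.sign π : ℤ) : ℚ) * pf M := by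
  unfold pf
  rw [Finset.mul_sum, ← Equiv.sum_comp (Equiv.mulLeft π) (fun σ => ((Equiv.Perm.sign π : ℤ) : ℚ) *
    (((Equiv.Perm.sign σ : ℤ) : ℚ) * ∏ k : κ, M (σ (Sum.inl k)) (σ (Sum.inr k))))]
  apply Finset.sum_congr rfl
  intro σ _
  have hs : ((Equiv.Perm.sign π : ℤ) : ℚ) * ((Equiv.Perm.sign π : ℤ) : ℚ) = 1 := by
    rw [← Int.cast_mul, ← Units.val_mul, Int.units_mul_self]; simp
  simp only [Matrix.submatrix_apply, Equiv.coe_mulLeft, Equiv.Perm.mul_apply, Equiv.Perm.sign_mul, Units.val_mul, Int.cast_mul]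
  rw [← mul_assoc, ← mul_assoc, hs, one_mul]

theorem pf_noninj {Λ : Type*} (M : Matrix Λ Λ ℚ) (r : κ ⊕ κ → Λ) (x y : κ ⊕ κ) (hxy : x ≠ y)
    (h : r x = r y) : pf (M.submatrix r r) = 0 := by
  have h1 := pf_perm (M.submatrix r r) (Equiv.swap x y)
  have h2 : (M.submatrix r r).submatrix (Equiv.swap x y) (Equiv.swap x y) = M.submatrix r r := by
    have : r ∘ (Equiv.swap x y) = r := by
      funext z
      simp only [Function.comp]
      rcases eq_or_ne z x with rfl | hzx
      · simp [h]
      rcases eq_or_ne z y with rfl | hzy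
      · simp [h]
      rw [Equiv.swap_apply_of_ne_of_ne hzx hzy]
    rw [Matrix.submatrix_submatrix, this]
  rw [h2, Equiv.Perm.sign_swap hxy] at h1
  simp at h1
  linarith

theorem pf_block (K : Matrix κ κ ℚ) :
    pf (Matrix.fromBlocks 0 K 0 0) = (Fintype.card κ).factorial * K.det := by
  classical
  unfold pf
  have hz : ∀ σ : Equiv.Perm (κ ⊕ κ), σ ∉ Set.range (Equiv.Perm.sumCongrHom κ κ) →
      ((Equiv.Perm.sign σ : ℤ) : ℚ) *
    ∏ k : κ, (Matrix.fromBlocks 0 K 0 0 : Matrix (κ ⊕ κ) (κ ⊕ κ) ℚ) (σ (Sum.inl k)) (σ (Sum.inr k)) = 0 := by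
    intro σ hσ
    by_contra hne
    apply hσ
    apply Equiv.Perm.mem_sumCongrHom_range_of_perm_mapsTo_inl
    rintro _ ⟨k, rfl⟩
    have := Finset.prod_ne_zero_iff.mp (right_ne_zero_of_mul hne) k (Finset.mem_univ k)
    rcases h1 : σ (Sum.inl k) with l | l
    · exact ⟨l, rfl⟩
    · rcases h2 : σ (Sum.inr k) with l' | l' <;> simp [h1, h2] at this
  have hsum : ∑ σ : Equiv.Perm (κ ⊕ κ), ((Equiv.Perm.sign σ : ℤ) : ℚ) *
    ∏ k : κ, (Matrix.fromBlocks 0 K 0 0 : Matrix (κ ⊕ κ) (κ ⊕ κ) ℚ) (σ (Sum.inl k)) (σ (Sum.inr k))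
    = ∑ p : Equiv.Perm κ × Equiv.Perm κ, (((Equiv.Perm.sign p.1 : ℤ) : ℚ) * ((Equiv.Perm.sign p.2 : ℤ) : ℚ)) *
      ∏ k, K (p.1 k) (p.2 k) := by
    symm
    apply Finset.sum_of_injOn (fun p => Equiv.Perm.sumCongrHom κ κ p)
    · intro p _ q _ h
      exact Equiv.Perm.sumCongrHom_injective h
    · intro p _; simp
    · intro σ _ hσ
      apply hz
      rintro ⟨p, rfl⟩
      exact hσ ⟨p, by simp, rfl⟩
    · intro p _
      simp [Equiv.Perm.sumCongrHom]
  rw [hsum, Fintype.sum_prod_type]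
  have : ∀ σ : Equiv.Perm κ, ∑ τ : Equiv.Perm κ, (((Equiv.Perm.sign σ : ℤ) : ℚ) * ((Equiv.Perm.sign τ : ℤ) : ℚ)) *
      ∏ k, K (σ k) (τ k) = K.det := by
    intro σ
    have h2 : (K.submatrix σ id).det = ((Equiv.Perm.sign σ : ℤ) : ℚ) * K.det := Matrix.det_permute σ K
    have hs : ((Equiv.Perm.sign σ : ℤ) : ℚ) * ((Equiv.Perm.sign σ : ℤ) : ℚ) = 1 := by
      rw [← Int.cast_mul, ← Units.val_mul, Int.units_mul_self]; simp
    have h3 : K.det = ((Equiv.Perm.sign σ : ℤ) : ℚ) * (K.submatrix σ id).det := by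
      rw [h2, ← mul_assoc, hs, one_mul]
    rw [h3, ← Matrix.det_transpose, Matrix.det_apply, Finset.mul_sum]
    apply Finset.sum_congr rfl
    intro τ _
    simp [Units.smul_def, mul_assoc]
  simp only [this, Finset.sum_const, Finset.card_univ, Fintype.card_perm, nsmul_eq_mul]
end
end CSSC

namespace CSSC
open Finset

theorem sum_sort {m : ℕ} {Λ : Type*} [Fintype Λ] [LinearOrder Λ] (F : (Fin m → Λ) → ℚ)
    (hF : ∀ f, ¬ Function.Injective f → F f = 0) :
    ∑ f : Fin m → Λ, F f = ∑ S : Fin m ↪o Λ, ∑ σ : Equiv.Perm (Fin m), F (S ∘ σ) := by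
  rw [← Fintype.sum_prod_type' (f := fun (S : Fin m ↪o Λ) (σ : Equiv.Perm (Fin m)) => F (S ∘ σ))]
  symm
  apply Finset.sum_of_injOn (fun p : (Fin m ↪o Λ) × Equiv.Perm (Fin m) => (p.1 ∘ p.2 : Fin m → Λ))
  · rintro ⟨S, σ⟩ _ ⟨S', σ'⟩ _ h
    simp only at h
    have hr : Set.range S = Set.range S' := by
      have := congrArg Set.range h
      rwa [Set.range_comp, Set.range_comp, σ.surjective.range_eq, σ'.surjective.range_eq,
        Set.image_univ, Set.image_univ] at this
    have hS : S = S' := by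
      apply DFunLike.coe_injective
      exact (StrictMono.range_inj S.strictMono S'.strictMono).mp hr
    subst hS
    have : σ = σ' := by
      ext k : 1
      exact S.injective (congrFun h k)
    rw [this]
  · intro p _; simp
  · intro f _ hf
    apply hF
    intro hinj
    apply hf
    have hs : StrictMono (f ∘ Tuple.sort f) :=
      (Tuple.monotone_sort f).strictMono_of_injective (hinj.comp (Tuple.sort f).injective)
    refine ⟨(OrderEmbedding.ofStrictMono _ hs, (Tuple.sort f)⁻¹), by simp, ?_⟩
    funext k
    simp
  · intro p _; rfl

theorem pf_expand {κ Λ : Type*} [Fintype κ] [DecidableEq κ] [Fintype Λ]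
    (w : Matrix (κ ⊕ κ) Λ ℚ) (M : Matrix Λ Λ ℚ) :
    pf (w * M * w.transpose) = ∑ r : κ ⊕ κ → Λ, (∏ z, w z (r z)) * pf (M.submatrix r r) := by
  have e : ∀ x y, (w * M * w.transpose) x y = ∑ pq : Λ × Λ, w x pq.1 * M pq.1 pq.2 * w y pq.2 := by
    intro x y
    simp only [Matrix.mul_apply, Matrix.transpose_apply, Fintype.sum_prod_type, Finset.sum_mul]
    rw [Finset.sum_comm]
  unfold pf
  classical
  simp only [e, Finset.prod_univ_sum, Finset.mul_sum, Fintype.piFinset_univ]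
  rw [Finset.sum_comm]
  conv_rhs => rw [Finset.sum_comm]
  rw [Finset.sum_comm]
  apply Finset.sum_congr rfl
  intro σ _
  let E : (κ ⊕ κ → Λ) ≃ (κ → Λ × Λ) :=
    ((Equiv.arrowCongr σ.symm (Equiv.refl Λ)).trans (Equiv.sumArrowEquivProdArrow κ κ Λ)).trans (Equiv.arrowProdEquivProdArrow κ (fun _ => Λ) (fun _ => Λ)).symm
  rw [← Equiv.sum_comp E]
  apply Finset.sum_congr rfl
  intro f _
  have e1 : ∀ k, (E f k).1 = f (σ (Sum.inl k)) := fun k => rfl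
  have e2 : ∀ k, (E f k).2 = f (σ (Sum.inr k)) := fun k => rfl
  rw [← Equiv.prod_comp σ]
  simp only [e1, e2, Matrix.submatrix_apply, Finset.prod_mul_distrib, Fintype.prod_sum_type]
  ring

/-- strict order matrix -/
def ordM (N : ℕ) : Matrix (Fin N) (Fin N) ℚ := Matrix.of fun p q => if p < q then 1 else 0
def onesM (N : ℕ) : Matrix (Fin N) (Fin N) ℚ := Matrix.of fun _ _ => 1
def thetaM (N : ℕ) : Matrix (Fin N ⊕ Fin N) (Fin N ⊕ Fin N) ℚ :=
  Matrix.fromBlocks (ordM N) (onesM N) 0 (ordM N).transpose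
def QM (N : ℕ) : Matrix (Fin N) (Fin N) ℚ := Matrix.of fun k l => if k = l then 1 else if l < k then 2 else 0

theorem QM_eq (N : ℕ) : QM N = onesM N + (ordM N).transpose - ordM N := by
  ext k l
  simp only [QM, onesM, ordM, Matrix.of_apply, Matrix.sub_apply, Matrix.add_apply, Matrix.transpose_apply]
  rcases lt_trichotomy k l with h | h | h
  · simp [h, h.ne, h.not_gt]
  · simp [h]
  · simp [h, h.ne', h.not_gt]; norm_num

theorem theta_sub {a N : ℕ} (S S' : Fin a ↪o Fin N) :
    (thetaM N).submatrix (Sum.map S S') (Sum.map S S') = thetaM a := by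
  ext x y
  rcases x with x | x <;> rcases y with y | y <;> simp [thetaM, ordM, onesM]

/-- sum of maximal minors -/
noncomputable def tau {a N : ℕ} (T : Matrix (Fin a) (Fin N) ℚ) : ℚ := ∑ S : Fin a ↪o Fin N, (T.submatrix id S).det

theorem pf_theta_map {a N : ℕ} (S S' : Fin a ↪o Fin N) (σ τ : Equiv.Perm (Fin a)) :
    pf ((thetaM N).submatrix (Sum.map (S ∘ σ) (S' ∘ τ)) (Sum.map (S ∘ σ) (S' ∘ τ)))
     = ((Equiv.Perm.sign σ : ℤ) : ℚ) * ((Equiv.Perm.sign τ : ℤ) : ℚ) * pf (thetaM a) := by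
  have h := pf_perm (thetaM a) (Equiv.sumCongr σ τ)
  rw [← theta_sub S S', Matrix.submatrix_submatrix] at h
  have e : (Sum.map (S ∘ σ) (S' ∘ τ)) = Sum.map S S' ∘ (Equiv.sumCongr σ τ) := by
    funext x; rcases x with x | x <;> simp
  rw [e, h, theta_sub]
  congr 1
  have : Equiv.Perm.sign (Equiv.sumCongr σ τ) = Equiv.Perm.sign σ * Equiv.Perm.sign τ :=
    Equiv.Perm.sign_sumCongr σ τ
  rw [this]; simp

theorem det_sign_sum {a N : ℕ} (T : Matrix (Fin a) (Fin N) ℚ) (S : Fin a → Fin N) :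
    ∑ σ : Equiv.Perm (Fin a), ((Equiv.Perm.sign σ : ℤ) : ℚ) * ∏ k, T k (S (σ k)) = (T.submatrix id S).det := by
  rw [← Matrix.det_transpose, Matrix.det_apply]
  simp [Units.smul_def]

theorem pf_tau {a N : ℕ} (T : Matrix (Fin a) (Fin N) ℚ) :
    pf (Matrix.fromBlocks T 0 0 T * thetaM N * (Matrix.fromBlocks T 0 0 T).transpose)
      = pf (thetaM a) * (tau T) ^ 2 := by
  rw [pf_expand]
  have h1 : ∑ r : Fin a ⊕ Fin a → Fin N ⊕ Fin N, (∏ z, (Matrix.fromBlocks T 0 0 T) z (r z)) * pf ((thetaM N).submatrix r r)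
     = ∑ p : (Fin a → Fin N) × (Fin a → Fin N), ((∏ k, T k (p.1 k)) * ∏ k, T k (p.2 k)) *
        pf ((thetaM N).submatrix (Sum.map p.1 p.2) (Sum.map p.1 p.2)) := by
    symm
    apply Finset.sum_of_injOn (fun p : (Fin a → Fin N) × (Fin a → Fin N) => Sum.map p.1 p.2)
    · rintro ⟨u, v⟩ _ ⟨u', v'⟩ _ h
      simp only at h
      ext k : 2
      · simpa using congrFun h (Sum.inl k)
      · simpa using congrFun h (Sum.inr k)
    · intro p _; simp
    · intro r _ hr
      by_contra hne
      apply hr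
      have hp := Finset.prod_ne_zero_iff.mp (left_ne_zero_of_mul hne)
      have hl : ∀ k, ∃ p, r (Sum.inl k) = Sum.inl p := by
        intro k
        have := hp (Sum.inl k) (Finset.mem_univ _)
        rcases h : r (Sum.inl k) with p | p
        · exact ⟨p, rfl⟩
        · simp [h] at this
      have hr : ∀ k, ∃ p, r (Sum.inr k) = Sum.inr p := by
        intro k
        have := hp (Sum.inr k) (Finset.mem_univ _)
        rcases h : r (Sum.inr k) with p | p
        · simp [h] at this
        · exact ⟨p, rfl⟩
      choose u hu using hl
      choose v hv using hr
      refine ⟨(u, v), by simp, ?_⟩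
      funext z
      rcases z with z | z <;> simp [hu, hv]
    · intro p _
      simp [Fintype.prod_sum_type]
  rw [h1, Fintype.sum_prod_type]
  rw [sum_sort]
  swap
  · intro f hf
    apply Finset.sum_eq_zero
    intro g _
    simp only [Function.Injective, not_forall] at hf
    obtain ⟨x, y, hxy, hne⟩ := hf
    rw [pf_noninj _ _ (Sum.inl x) (Sum.inl y) (by simpa using hne) (by simp [hxy]), mul_zero]
  have h2 : ∀ (S : Fin a ↪o Fin N) (σ : Equiv.Perm (Fin a)),
     ∑ y : Fin a → Fin N, ((∏ k, T k ((S ∘ σ) k)) * ∏ k, T k (y k)) *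
        pf ((thetaM N).submatrix (Sum.map (S ∘ σ) y) (Sum.map (S ∘ σ) y)) =
      ((Equiv.Perm.sign σ : ℤ) : ℚ) * (∏ k, T k (S (σ k))) * (pf (thetaM a) * tau T) := by
    intro S σ
    rw [sum_sort]
    swap
    · intro f hf
      simp only [Function.Injective, not_forall] at hf
      obtain ⟨x, y, hxy, hne⟩ := hf
      rw [pf_noninj _ _ (Sum.inr x) (Sum.inr y) (by simpa using hne) (by simp [hxy]), mul_zero]
    unfold tau
    simp only [pf_theta_map, ← det_sign_sum, Finset.mul_sum]
    apply Finset.sum_congr rfl; intro S' _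
    apply Finset.sum_congr rfl; intro τ _
    simp only [Function.comp]
    ring
  simp only [h2, ← Finset.sum_mul, det_sign_sum]
  change tau T * _ = _
  ring

theorem pf_G {a N : ℕ} (T : Matrix (Fin a) (Fin N) ℚ) :
    pf (Matrix.fromBlocks T 0 0 T * thetaM N * (Matrix.fromBlocks T 0 0 T).transpose)
      = a.factorial * (T * QM N * T.transpose).det := by
  set X := T * ordM N * T.transpose with hX
  set J := T * onesM N * T.transpose with hJ
  have hXt : T * (ordM N).transpose * T.transpose = X.transpose := by
    rw [hX]; simp [Matrix.transpose_mul, Matrix.mul_assoc]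
  have hJt : J.transpose = J := by
    rw [hJ]; simp only [Matrix.transpose_mul, Matrix.mul_assoc, Matrix.transpose_transpose]
    rfl
  have hG : T * QM N * T.transpose = J + X.transpose - X := by
    rw [QM_eq, ← hXt, hX, hJ]; simp only [Matrix.mul_add, Matrix.mul_sub, Matrix.add_mul, Matrix.sub_mul]
  have hM : Matrix.fromBlocks T 0 0 T * thetaM N * (Matrix.fromBlocks T 0 0 T).transpose
     = Matrix.fromBlocks X J 0 X.transpose := by
    rw [thetaM, Matrix.fromBlocks_transpose, Matrix.fromBlocks_multiply, Matrix.fromBlocks_multiply]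
    simp [hX, hJ, hXt]
  rw [hM, hG]
  have hc := pf_conj (Matrix.fromBlocks 1 1 1 (-1)) (Matrix.fromBlocks X J 0 X.transpose)
  have hdet : (Matrix.fromBlocks 1 1 1 (-1) : Matrix (Fin a ⊕ Fin a) (Fin a ⊕ Fin a) ℚ).det = (-2) ^ a := by
    rw [Matrix.det_fromBlocks_one₁₁]
    have : (-1 - 1 * 1 : Matrix (Fin a) (Fin a) ℚ) = (-2 : ℚ) • (1 : Matrix (Fin a) (Fin a) ℚ) := by
      ext i j
      by_cases h : i = j
      · simp [h, Matrix.one_apply]; norm_num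
      · simp [h, Matrix.one_apply]
    rw [this, Matrix.det_smul]; simp
  rw [hdet] at hc
  have hs : pf (Matrix.fromBlocks 1 1 1 (-1) * Matrix.fromBlocks X J 0 X.transpose * (Matrix.fromBlocks 1 1 1 (-1)).transpose)
    = pf (Matrix.fromBlocks 0 ((-2 : ℚ) • (J + X.transpose - X)) 0 0) := by
    apply pf_skew_congr
    have hJs : ∀ i j, J i j = J j i := fun i j => by rw [← congrFun (congrFun hJt i) j]; rfl
    rw [Matrix.fromBlocks_transpose, Matrix.fromBlocks_multiply, Matrix.fromBlocks_multiply]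
    intro x y
    rcases x with x | x <;> rcases y with y | y <;> simp <;> linarith [hJs x y]
  rw [hs, pf_block, Matrix.det_smul] at hc
  simp only [Fintype.card_fin] at hc
  have h2 : ((-2 : ℚ)) ^ a ≠ 0 := by positivity
  apply mul_left_cancel₀ h2
  rw [← hc]; ring

theorem tau_sq {a N : ℕ} (T : Matrix (Fin a) (Fin N) ℚ) :
    (tau T) ^ 2 = (T * QM N * T.transpose).det := by
  have hc : pf (thetaM a) = a.factorial := by
    have h1 := pf_tau (1 : Matrix (Fin a) (Fin a) ℚ)
    rw [pf_G] at h1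
    have h2 : tau (1 : Matrix (Fin a) (Fin a) ℚ) = 1 := by
      unfold tau
      have : ∀ S : Fin a ↪o Fin a, ((1 : Matrix (Fin a) (Fin a) ℚ).submatrix id S).det = 1 := by
        intro S
        have : (S : Fin a → Fin a) = id := by
          apply (StrictMono.range_inj S.strictMono strictMono_id).mp
          rw [(Finite.injective_iff_surjective.mp S.injective).range_eq]; simp
        rw [this]; simp
      simp only [this]
      have : Fintype.card (Fin a ↪o Fin a) = 1 := by
        rw [Fintype.card_eq_one_iff]
        refine ⟨RelEmbedding.refl _, fun S => ?_⟩
        apply DFunLike.coe_injective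
        apply (StrictMono.range_inj S.strictMono (OrderEmbedding.strictMono _)).mp
        rw [(Finite.injective_iff_surjective.mp S.injective).range_eq]; simp
      rw [Finset.sum_const, Finset.card_univ, this]; simp
    have h3 : (QM a).det = 1 := by
      rw [Matrix.det_of_isLowerTriangular]
      · simp [QM]
      · intro i j hij
        have : i < j := hij
        simp [QM, this.ne, this.not_gt]
    simp [h2, h3] at h1
    exact h1.symm
  have h := pf_tau T
  rw [pf_G, hc] at h
  have : (a.factorial : ℚ) ≠ 0 := by exact_mod_cast a.factorial_ne_zero
  exact (mul_left_cancel₀ this h).symm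
end CSSC

namespace CSSC
open Finset

/-- coefficient of `x^p` in `(x(1+x))^m` -/
def ee (m p : ℕ) : ℚ := if m ≤ p then (m.choose (p - m) : ℚ) else 0
/-- coefficient of `x^p` in `(1+2x) (x(1+x))^m` -/
def ff (m p : ℕ) : ℚ := ee m p + if 1 ≤ p then 2 * ee m (p - 1) else 0

theorem ee_zero_of_lt {m p : ℕ} (h : 2 * m < p) : ee m p = 0 := by
  unfold ee
  split_ifs
  · rw [Nat.choose_eq_zero_of_lt (by omega)]; simp
  · rfl

theorem ee_succ_zero (m : ℕ) : ee (m+1) 0 = 0 := by simp [ee]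
theorem ee_succ_one (m : ℕ) : ee (m+1) 1 = ee m 0 := by
  unfold ee
  rcases m with _ | m <;> simp
theorem ee_succ (m p : ℕ) : ee (m+1) (p+2) = ee m p + ee m (p+1) := by
  unfold ee
  by_cases h : m ≤ p
  · rw [if_pos (by omega), if_pos h, if_pos (by omega)]
    obtain ⟨d, rfl⟩ := Nat.exists_eq_add_of_le h
    rw [show m + d + 2 - (m+1) = d + 1 by omega, show m + d - m = d by omega,
      show m + d + 1 - m = d + 1 by omega, Nat.choose_succ_succ]
    push_cast; ring
  · by_cases h2 : m = p + 1
    · subst h2; simp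
    · rw [if_neg (by omega), if_neg h, if_neg (by omega)]; simp

theorem sum_ee_succ (m N : ℕ) (X : ℕ → ℚ) :
    ∑ p ∈ range (N+2), ee (m+1) p * X p
      = ∑ p ∈ range N, ee m p * (X (p+1) + X (p+2)) + ee m N * X (N+1) := by
  induction N with
  | zero => simp [Finset.sum_range_succ, ee_succ_zero, ee_succ_one]
  | succ N ih =>
    rw [Finset.sum_range_succ, ih, Finset.sum_range_succ, ee_succ]; ring

def EE (l p : ℕ) : ℚ := ee l p + 2 * ∑ q ∈ range p, ee l q

def TM (a : ℕ) : Matrix (Fin a) (Fin (2*a)) ℚ := Matrix.of fun m p => ee m p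
def DM (a : ℕ) : Matrix (Fin a) (Fin a) ℚ := Matrix.of fun m l => ∑ p ∈ range (2*a), ee m p * ff l p

theorem G_apply (a : ℕ) (m l : Fin a) :
    (TM a * QM (2*a) * (TM a).transpose) m l = ∑ p ∈ range (2*a), ee m p * EE l p := by
  rw [Matrix.mul_assoc, Matrix.mul_apply, ← Fin.sum_univ_eq_sum_range (fun p => ee m p * EE l p)]
  refine Finset.sum_congr rfl fun p _ => ?_
  congr 1
  rw [Matrix.mul_apply]
  have : ∀ q : Fin (2*a), QM (2*a) p q * (TM a).transpose q l
      = (fun q : ℕ => if q = p then ee l q else if q < p then 2 * ee l q else 0) (q : ℕ) := by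
    intro q
    simp only [QM, TM, Matrix.of_apply, Matrix.transpose_apply]
    rcases lt_trichotomy q p with h | h | h
    · have h1 : ¬ (q:ℕ) = p := fun h' => h.ne (Fin.ext h')
      simp [h, h.ne', h1]
    · simp [h]
    · have h1 : ¬ (q:ℕ) < p := by simpa using h.le
      have h2 : ¬ (q:ℕ) = p := fun h' => h.ne (Fin.ext h').symm
      simp [h.not_gt, h.ne, h1, h2]
  rw [Finset.sum_congr rfl (fun q _ => this q), Fin.sum_univ_eq_sum_range
    (fun q : ℕ => if q = p then ee l q else if q < p then 2 * ee l q else 0)]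
  have hp := p.2
  rw [← Finset.sum_subset (s₁ := range (p+1))]
  · rw [Finset.sum_range_succ]
    simp only [if_true]
    unfold EE
    rw [add_comm, Finset.mul_sum]
    congr 1
    refine Finset.sum_congr rfl fun q hq => ?_
    rw [Finset.mem_range] at hq
    rw [if_neg (by omega), if_pos hq]
  · intro q hq; rw [Finset.mem_range] at *; omega
  · intro q _ hq; rw [Finset.mem_range] at hq
    rw [if_neg (by omega), if_neg (by omega)]

theorem detD_eq (a : ℕ) : (DM a).det = (TM a * QM (2*a) * (TM a).transpose).det := by
  rcases a with _ | a
  · simp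
  symm
  apply Matrix.det_eq_of_forall_row_eq_smul_add_pred (fun _ => 2)
  · intro j
    rw [G_apply]
    simp only [DM, Matrix.of_apply]
    refine Finset.sum_congr rfl fun p _ => ?_
    rcases p with _ | p
    · simp [EE, ff]
    · have : ee ((0 : Fin (a+1)) : ℕ) (p+1) = 0 := ee_zero_of_lt (by simp)
      rw [this]; simp
  · intro i j
    rw [G_apply, G_apply]
    simp only [DM, Matrix.of_apply]
    have e : 2 * (a+1) = 2*a + 2 := by ring
    have hi := i.2
    rw [e, Fin.val_succ, sum_ee_succ, sum_ee_succ, Finset.sum_range_succ, Finset.sum_range_succ]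
    simp only [Fin.val_castSucc]
    rw [ee_zero_of_lt (show 2 * (i:ℕ) < 2 * a by omega), ee_zero_of_lt (show 2 * (i:ℕ) < 2 * a + 1 by omega)]
    simp only [zero_mul, add_zero]
    rw [Finset.mul_sum, ← Finset.sum_add_distrib]
    refine Finset.sum_congr rfl fun p _ => ?_
    simp only [EE, ff, Finset.sum_range_succ]
    simp only [Nat.le_add_left, if_true, show p + 2 - 1 = p + 1 by omega, show p + 1 - 1 = p by omega]
    ring

theorem tau_sq_D (a : ℕ) : (tau (TM a))^2 = (DM a).det := by rw [tau_sq, detD_eq]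

open Polynomial in
noncomputable def eP (m : ℕ) : ℚ[X] := (X * (1 + X)) ^ m
open Polynomial in
noncomputable def fP (m : ℕ) : ℚ[X] := (1 + 2 * X) * eP m

open Polynomial in
theorem eP_coeff (m p : ℕ) : (eP m).coeff p = ee m p := by
  rw [eP, mul_pow, coeff_X_pow_mul', ee]
  split_ifs
  · rw [add_comm, Polynomial.coeff_X_add_one_pow]
  · rfl

open Polynomial in
theorem fP_coeff (m p : ℕ) : (fP m).coeff p = ff m p := by
  rw [fP, ff, add_mul, one_mul, coeff_add, eP_coeff, mul_assoc, show (2 : ℚ[X]) = C 2 by rfl, coeff_C_mul]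
  rcases p with _ | p
  · simp
  · simp [eP_coeff]

open Polynomial in
theorem comp_coeff (v : ℚ[X]) (N p : ℕ) (hv : v.natDegree < N) :
    (v.comp (-1 - X)).coeff p = ∑ q ∈ range N, (-1)^q * (q.choose p : ℚ) * v.coeff q := by
  rw [comp, eval₂_eq_sum_range' _ hv, finsetSum_coeff]
  refine Finset.sum_congr rfl fun q _ => ?_
  have : (-1 - X : ℚ[X]) = C (-1) * (X + 1) := by simp; ring
  rw [this, mul_pow, ← C_pow, coeff_C_mul, coeff_C_mul, coeff_X_add_one_pow]
  ring

open Polynomial in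
theorem eP_comp (m : ℕ) : (eP m).comp (-1 - X) = eP m := by
  rw [eP, pow_comp]; congr 1; simp; ring
open Polynomial in
theorem fP_comp (m : ℕ) : (fP m).comp (-1 - X) = - fP m := by
  rw [fP, mul_comp, eP_comp]; simp; ring

open Polynomial in
theorem eP_deg (m : ℕ) : (eP m).natDegree ≤ 2 * m := by
  unfold eP; compute_degree!
  omega
open Polynomial in
theorem fP_deg (m : ℕ) : (fP m).natDegree ≤ 2 * m + 1 := by
  unfold fP
  refine natDegree_mul_le.trans ?_
  have := eP_deg m
  have h2 : (1 + 2 * X : ℚ[X]).natDegree ≤ 1 := by compute_degree!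
  omega

end CSSC

namespace CSSC
open Finset

theorem glue0 {a : ℕ} (i j : Fin a ↪o Fin (2*a)) (h : ∀ k l, i k ≠ j l) (k l : Fin a) :
    (i k : ℕ) < j l ↔ (k : ℕ) + l < j l := by
  have hk := k.2
  have hl := l.2
  have hj := (j l).2
  constructor
  · intro hlt
    have hlt' : i k < j l := hlt
    have hd : Disjoint ((Iic k).map i.toEmbedding) ((Iio l).map j.toEmbedding) := by
      rw [Finset.disjoint_left]
      intro x hx hx'
      simp only [Finset.mem_map] at hx hx'
      obtain ⟨p, _, hp⟩ := hx
      obtain ⟨q, _, hq⟩ := hx'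
      exact h p q (hp.trans hq.symm)
    have hs : ((Iic k).map i.toEmbedding).disjUnion ((Iio l).map j.toEmbedding) hd ⊆ Iio (j l) := by
      intro x hx
      simp only [Finset.mem_disjUnion, Finset.mem_map, Finset.mem_Iic, Finset.mem_Iio] at hx ⊢
      rcases hx with ⟨p, hp, rfl⟩ | ⟨q, hq, rfl⟩
      · exact lt_of_le_of_lt (i.monotone hp) hlt'
      · exact j.strictMono hq
    have := Finset.card_le_card hs
    rw [Finset.card_disjUnion] at this
    simp at this
    omega
  · intro hlt
    by_contra hc
    have hlt' : j l < i k := lt_of_le_of_ne (by simpa using hc) (h k l).symm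
    have hd : Disjoint ((Ici k).map i.toEmbedding) ((Ioi l).map j.toEmbedding) := by
      rw [Finset.disjoint_left]
      intro x hx hx'
      simp only [Finset.mem_map] at hx hx'
      obtain ⟨p, _, hp⟩ := hx
      obtain ⟨q, _, hq⟩ := hx'
      exact h p q (hp.trans hq.symm)
    have hs : ((Ici k).map i.toEmbedding).disjUnion ((Ioi l).map j.toEmbedding) hd ⊆ Ioi (j l) := by
      intro x hx
      simp only [Finset.mem_disjUnion, Finset.mem_map, Finset.mem_Ici, Finset.mem_Ioi] at hx ⊢
      rcases hx with ⟨p, hp, rfl⟩ | ⟨q, hq, rfl⟩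
      · exact lt_of_lt_of_le hlt' (i.monotone hp)
      · exact j.strictMono hq
    have := Finset.card_le_card hs
    rw [Finset.card_disjUnion] at this
    simp at this
    omega

theorem glue {a : ℕ} (i j : Fin a ↪o Fin (2*a)) (h : ∀ k l, i k ≠ j l) (k l : Fin a) :
    (i k : ℕ) ≤ k + l ↔ (k : ℕ) + l < j l := by
  have h1 := glue0 i j h k l
  have h2 := glue0 j i (fun x y => (h y x).symm) l k
  have h3 : (i k : ℕ) ≠ j l := fun e => h k l (Fin.ext e)
  omega

def wE (a : ℕ) : Fin a ⊕ Fin a ≃ Fin (2*a) := finSumFinEquiv.trans (finCongr (two_mul a).symm)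

@[simp] theorem wE_inl (a : ℕ) (k : Fin a) : (wE a (Sum.inl k) : ℕ) = k := by simp [wE]
@[simp] theorem wE_inr (a : ℕ) (k : Fin a) : (wE a (Sum.inr k) : ℕ) = a + k := by simp [wE, add_comm]

noncomputable def eps {a : ℕ} (r : Fin a ⊕ Fin a → Fin (2*a)) : ℚ :=
  ((1 : Matrix (Fin (2*a)) (Fin (2*a)) ℚ).submatrix (wE a) r).det

theorem eps_noninj {a : ℕ} (r : Fin a ⊕ Fin a → Fin (2*a)) (x y) (hxy : x ≠ y) (h : r x = r y) :
    eps r = 0 := by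
  unfold eps
  exact Matrix.det_zero_of_column_eq hxy (fun k => by rw [Matrix.submatrix_apply, Matrix.submatrix_apply, h])

theorem eps_perm {a : ℕ} (r : Fin a ⊕ Fin a → Fin (2*a)) (π : Equiv.Perm (Fin a ⊕ Fin a)) :
    eps (r ∘ π) = ((Equiv.Perm.sign π : ℤ) : ℚ) * eps r := by
  unfold eps
  rw [← Matrix.det_permute']
  rfl

theorem pf_sum {a : ℕ} (U : Matrix (Fin (2*a)) (Fin (2*a)) ℚ) :
    pf (U.submatrix (wE a) (wE a)) =
      ∑ r : Fin a ⊕ Fin a → Fin (2*a), eps r * ∏ k, U (r (Sum.inl k)) (r (Sum.inr k)) := by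
  have h := sum_fun_det (1 : Matrix (Fin a ⊕ Fin a) (Fin a ⊕ Fin a) ℚ)
    (fun f => ∏ k, U (wE a (f (Sum.inl k))) (wE a (f (Sum.inr k))))
  rw [Matrix.det_one, one_mul] at h
  unfold pf
  simp only [Matrix.submatrix_apply]
  rw [← h]
  apply Fintype.sum_equiv (Equiv.arrowCongr (Equiv.refl _) (wE a))
  intro f
  simp only [Equiv.arrowCongr_apply, Equiv.refl_symm, Equiv.coe_refl, Function.comp, id]
  rw [mul_comm]
  congr 1
  unfold eps
  congr 1
  ext x y
  simp [Matrix.one_apply]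

theorem pf_sorted {a : ℕ} (U : Matrix (Fin (2*a)) (Fin (2*a)) ℚ) :
    pf (U.submatrix (wE a) (wE a)) =
      a.factorial * ∑ i : Fin a ↪o Fin (2*a), ∑ j : Fin a ↪o Fin (2*a),
        eps (Sum.elim i j) * (U.submatrix i j).det := by
  rw [pf_sum, ← Equiv.sum_comp (Equiv.sumArrowEquivProdArrow (Fin a) (Fin a) (Fin (2*a))).symm,
    Fintype.sum_prod_type, sum_sort]
  swap
  · intro f hf
    apply Finset.sum_eq_zero
    intro g _
    simp only [Function.Injective, not_forall] at hf
    obtain ⟨x, y, hxy, hne⟩ := hf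
    rw [eps_noninj _ (Sum.inl x) (Sum.inl y) (by simpa using hne) (by simpa using hxy), zero_mul]
  rw [Finset.mul_sum]
  refine Finset.sum_congr rfl fun i _ => ?_
  have h2 : ∀ σ : Equiv.Perm (Fin a),
    ∑ g : Fin a → Fin (2*a), eps (Sum.elim (i ∘ σ) g) * ∏ k, U (i (σ k)) (g k)
     = ∑ j : Fin a ↪o Fin (2*a), eps (Sum.elim i j) * (U.submatrix i j).det := by
    intro σ
    rw [sum_sort]
    swap
    · intro f hf
      simp only [Function.Injective, not_forall] at hf
      obtain ⟨x, y, hxy, hne⟩ := hf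
      rw [eps_noninj _ (Sum.inr x) (Sum.inr y) (by simpa using hne) (by simpa using hxy), zero_mul]
    refine Finset.sum_congr rfl fun j _ => ?_
    have h3 : ∀ τ : Equiv.Perm (Fin a), eps (Sum.elim (i ∘ σ) (j ∘ τ)) =
       ((Equiv.Perm.sign σ : ℤ) : ℚ) * ((Equiv.Perm.sign τ : ℤ) : ℚ) * eps (Sum.elim i j) := by
      intro τ
      have := eps_perm (Sum.elim i j) (Equiv.sumCongr σ τ)
      rw [Equiv.Perm.sign_sumCongr] at this
      push_cast at this
      rw [← this]
      congr 1
      funext z; rcases z with z | z <;> simp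
    simp only [h3]
    have h4 := det_sign_sum (U.submatrix (i ∘ σ) id) j
    have h5 := Matrix.det_permute σ (U.submatrix i j)
    have h6 : ((Equiv.Perm.sign σ : ℤ) : ℚ) * ((Equiv.Perm.sign σ : ℤ) : ℚ) = 1 := by
      norm_cast; simp
    simp only [Matrix.submatrix_submatrix, Matrix.submatrix_apply, Function.comp_apply, id, Function.comp_id, Function.id_comp] at h4 h5
    have h7 : (U.submatrix (i ∘ σ) j).det = ((Equiv.Perm.sign σ : ℤ) : ℚ) * (U.submatrix i j).det := by
      rw [← h5]
    calc _ = ((Equiv.Perm.sign σ : ℤ) : ℚ) * eps (Sum.elim i j) * ∑ τ : Equiv.Perm (Fin a), ((Equiv.Perm.sign τ : ℤ) : ℚ) * ∏ k, U (i (σ k)) (j (τ k)) := by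
          rw [Finset.mul_sum]
          refine Finset.sum_congr rfl fun τ _ => ?_
          simp only [Function.comp]
          ring
      _ = ((Equiv.Perm.sign σ : ℤ) : ℚ) * eps (Sum.elim i j) * (((Equiv.Perm.sign σ : ℤ) : ℚ) * (U.submatrix i j).det) := by
          rw [h4, h7]
      _ = (((Equiv.Perm.sign σ : ℤ) : ℚ) * ((Equiv.Perm.sign σ : ℤ) : ℚ)) * (eps (Sum.elim i j) *  (U.submatrix i j).det) := by ring
      _ = _ := by rw [h6, one_mul]
  have h8 : ∀ σ : Equiv.Perm (Fin a), ∑ x : Fin a → Fin (2*a), (eps ((Equiv.sumArrowEquivProdArrow (Fin a) (Fin a) (Fin (2*a))).symm (i ∘ σ, x)) * ∏ k, U ((Equiv.sumArrowEquivProdArrow (Fin a) (Fin a) (Fin (2*a))).symm (i ∘ σ, x) (Sum.inl k)) ((Equiv.sumArrowEquivProdArrow (Fin a) (Fin a) (Fin (2*a))).symm (i ∘ σ, x) (Sum.inr k))) = ∑ g : Fin a → Fin (2*a), eps (Sum.elim (i ∘ σ) g) * ∏ k, U (i (σ k)) (g k) := by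
    intro σ
    rfl
  simp only [h8, h2, Finset.sum_const, Finset.card_univ, Fintype.card_perm, Fintype.card_fin, nsmul_eq_mul]

theorem prod_thresh (a c : ℕ) (hc : c ≤ a) :
    ∏ k : Fin a, (if (k : ℕ) < c then (1 : ℚ) else -1) = (-1) ^ (a + c) := by
  rw [Fin.prod_univ_eq_prod_range (fun k => if k < c then (1 : ℚ) else -1)]
  obtain ⟨d, rfl⟩ := Nat.exists_eq_add_of_le hc
  rw [Finset.prod_range_add]
  rw [Finset.prod_congr rfl (g := fun _ => (1:ℚ)) (fun x hx => if_pos (by simpa using hx))]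
  rw [Finset.prod_congr (s₁ := range d) rfl (g := fun _ => (-1:ℚ)) (fun x hx => if_neg (by omega))]
  simp only [prod_const_one, prod_const, card_range, one_mul]
  rw [show c + d + c = 2 * c + d by ring, pow_add, pow_mul]; simp

theorem eps_val {a : ℕ} (i j : Fin a ↪o Fin (2*a)) (h : ∀ k l, i k ≠ j l) :
    eps (Sum.elim i j) * ∏ l, (-1 : ℚ) ^ (j l : ℕ) = ∏ l : Fin a, (-1 : ℚ) ^ (a + l : ℕ) := by
  have hinj : Function.Injective (Sum.elim i j) := by
    intro x y hxy
    rcases x with x | x <;> rcases y with y | y <;> simp at hxy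
    · rw [hxy]
    · exact absurd hxy (h _ _)
    · exact absurd hxy.symm (h _ _)
    · rw [hxy]
  have hinj2 : Function.Injective (Sum.elim i j ∘ (wE a).symm) := hinj.comp (wE a).symm.injective
  obtain ⟨ρ, hρ⟩ : ∃ ρ : Equiv.Perm (Fin (2*a)), ∀ z, ρ z = Sum.elim i j ((wE a).symm z) :=
    ⟨Equiv.ofBijective _ (Finite.injective_iff_bijective.mp hinj2), fun z => rfl⟩
  have h1 : eps (Sum.elim i j) = ((Equiv.Perm.sign ρ : ℤ) : ℚ) := by
    unfold eps
    have : (1 : Matrix (Fin (2*a)) (Fin (2*a)) ℚ).submatrix (wE a) (Sum.elim i j) =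
       ((1 : Matrix (Fin (2*a)) (Fin (2*a)) ℚ).submatrix id ρ).submatrix (wE a) (wE a) := by
      ext x y
      simp only [Matrix.submatrix_apply]
      rw [hρ, Equiv.symm_apply_apply]; rfl
    rw [this, Matrix.det_submatrix_equiv_self, Matrix.det_permute', Matrix.det_one, mul_one]
  have h2 : ((Equiv.Perm.sign ρ : ℤ) : ℚ) = ∏ x : Fin (2*a), ∏ y : Fin (2*a),
      (if x < y then (if ρ x < ρ y then (1:ℚ) else -1) else 1) := by
    rw [Equiv.Perm.sign_eq_prod_prod_Ioi]
    push_cast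
    refine Finset.prod_congr rfl fun x _ => ?_
    rw [← Finset.prod_filter]
    refine Finset.prod_congr ?_ fun y _ => ?_
    · ext y; simp
    · split_ifs <;> simp
  have h3 : ((Equiv.Perm.sign ρ : ℤ) : ℚ) = ∏ x : Fin a, ∏ y : Fin a,
      (if (i x : ℕ) < j y then (1:ℚ) else -1) := by
    have hsp : ∀ F : Fin (2*a) → ℚ, ∏ y, F y = (∏ k, F (wE a (Sum.inl k))) * ∏ k, F (wE a (Sum.inr k)) := by
      intro F
      rw [← Equiv.prod_comp (wE a), Fintype.prod_sum_type]
    rw [h2]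
    simp only [hsp, hρ, Equiv.symm_apply_apply, Sum.elim_inl, Sum.elim_inr]
    rw [← mul_one (∏ x : Fin a, ∏ y : Fin a, (if (i x : ℕ) < j y then (1:ℚ) else -1))]
    congr 1
    · refine Finset.prod_congr rfl fun x _ => ?_
      rw [Finset.prod_eq_one, one_mul]
      · refine Finset.prod_congr rfl fun y _ => ?_
        have : wE a (Sum.inl x) < wE a (Sum.inr y) := by
          rw [Fin.lt_def]; simp; omega
        rw [if_pos this]
        rfl
      · intro y _
        split_ifs with u v
        · rfl
        · rw [Fin.lt_def] at u; simp at u v; exact absurd u (by omega)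
        · rfl
    · refine Finset.prod_eq_one fun x _ => ?_
      rw [Finset.prod_eq_one, Finset.prod_eq_one, one_mul]
      · intro y _
        split_ifs with u v
        · rfl
        · rw [Fin.lt_def] at u; simp at u v; exact absurd u (by omega)
        · rfl
      · intro y _
        split_ifs with u v
        · rfl
        · rw [Fin.lt_def] at u; simp at u; exact absurd u (by omega)
        · rfl
  rw [h1, h3, Finset.prod_comm, ← Finset.prod_mul_distrib]
  refine Finset.prod_congr rfl fun l _ => ?_
  have hjl : (l : ℕ) ≤ j l := by
    by_cases h0 : (0 : ℕ) < l + 1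
    · have := Finset.card_le_card (s := (Iio l).map j.toEmbedding) (t := Iio (j l)) (by
        intro x hx
        simp only [Finset.mem_map, Finset.mem_Iio] at hx ⊢
        obtain ⟨q, hq, rfl⟩ := hx
        exact j.strictMono hq)
      simpa using this
    · omega
  have hjl2 : (j l : ℕ) ≤ a + l := by
    have := Finset.card_le_card (s := (Ioi l).map j.toEmbedding) (t := Ioi (j l)) (by
        intro x hx
        simp only [Finset.mem_map, Finset.mem_Ioi] at hx ⊢
        obtain ⟨q, hq, rfl⟩ := hx
        exact j.strictMono hq)
    simp at this
    have := l.2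
    have := (j l).2
    omega
  have h4 : ∏ k : Fin a, (if (i k : ℕ) < j l then (1:ℚ) else -1) = ∏ k : Fin a, (if (k : ℕ) < j l - l then (1:ℚ) else -1) := by
    refine Finset.prod_congr rfl fun k _ => ?_
    have := glue0 i j h k l
    congr 1
    rw [eq_iff_iff, this]; omega
  rw [h4, prod_thresh _ _ (by omega), ← pow_add]
  obtain ⟨d, hd⟩ := Nat.exists_eq_add_of_le hjl
  rw [hd, show a + (l + d - l) + (l + d) = a + l + 2 * d by omega, pow_add _ _ (2 * d), pow_mul]
  simp

end CSSC

namespace CSSC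
open Finset

def UM (a : ℕ) : Matrix (Fin (2*a)) (Fin (2*a)) ℚ := Matrix.of fun p q => (-1)^(q:ℕ) * ((q:ℕ).choose p : ℚ)
/-- all rows -/
def RM (a : ℕ) : Matrix (Fin (2*a)) (Fin (2*a)) ℚ :=
  Matrix.of fun r p => if (r:ℕ) % 2 = 0 then ee (r/2) p else ff (r/2) p

def iE (a : ℕ) : Fin a ⊕ Fin a ≃ Fin (2*a) where
  toFun := Sum.elim (fun m => ⟨2*m, by omega⟩) (fun m => ⟨2*m+1, by omega⟩)
  invFun r := if (r:ℕ) % 2 = 0 then Sum.inl ⟨r/2, by omega⟩ else Sum.inr ⟨r/2, by omega⟩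
  left_inv x := by
    rcases x with x | x
    · simp
    · have : ¬ ((2*(x:ℕ)+1) % 2 = 0) := by omega
      simp only [Sum.elim_inr, this, if_false]
      congr 1; ext; simp; omega
  right_inv r := by
    by_cases h : (r:ℕ) % 2 = 0
    · simp only [h, if_true, Sum.elim_inl]; ext; simp; omega
    · simp only [h, if_false, Sum.elim_inr]; ext; simp; omega

theorem det_RM (a : ℕ) : (RM a).det = 2 ^ a := by
  rw [Matrix.det_of_isLowerTriangular]
  · have h1 : ∏ i, RM a i i = ∏ r ∈ range (2*a), (if r % 2 = 0 then (1:ℚ) else 2) := by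
      rw [← Fin.prod_univ_eq_prod_range (fun r => if r % 2 = 0 then (1:ℚ) else 2)]
      refine Finset.prod_congr rfl fun r _ => ?_
      simp only [RM, Matrix.of_apply]
      split_ifs with h
      · obtain ⟨m, hm⟩ : ∃ m, (r:ℕ) = 2*m := ⟨r/2, by omega⟩
        rw [hm, show 2*m/2 = m by omega, ee, if_pos (by omega), show 2*m-m = m by omega]; simp
      · obtain ⟨m, hm⟩ : ∃ m, (r:ℕ) = 2*m+1 := ⟨r/2, by omega⟩
        rw [hm, show (2*m+1)/2 = m by omega, ff, ee_zero_of_lt (by omega), if_pos (by omega), ee, if_pos (by omega),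
          show 2*m+1-1-m = m by omega]; simp
    rw [h1]
    clear h1
    induction a with
    | zero => simp
    | succ a ih =>
      rw [show 2*(a+1) = 2*a+1+1 by ring, Finset.prod_range_succ, Finset.prod_range_succ, ih,
        if_pos (by omega), if_neg (by omega), pow_succ]; ring
  · intro r p hrp
    have hrp' : (r:ℕ) < p := by simpa using hrp
    simp only [RM, Matrix.of_apply]
    split_ifs with h
    · exact ee_zero_of_lt (by omega)
    · rw [ff, ee_zero_of_lt (by omega), ee_zero_of_lt (by omega)]; simp

open Polynomial in
theorem U_row (a : ℕ) (v : ℚ[X]) (hv : v.natDegree < 2*a) (p : Fin (2*a)) :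
    ∑ q : Fin (2*a), UM a p q * v.coeff q = (v.comp (-1 - X)).coeff p := by
  rw [comp_coeff v (2*a) p hv, ← Fin.sum_univ_eq_sum_range (fun q => (-1)^q * (q.choose p : ℚ) * v.coeff q)]
  rfl

open Polynomial in
theorem pf_U (a : ℕ) : |pf ((UM a).submatrix (wE a) (wE a))| = a.factorial * |(DM a).det| := by
  set P := (RM a).submatrix (iE a) (wE a) with hP
  have hPdet : |P.det| = 2 ^ a := by
    rw [hP, Matrix.abs_det_submatrix_equiv_equiv, det_RM]; simp
  have hc := pf_conj P ((UM a).submatrix (wE a) (wE a))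
  have hM : P * (UM a).submatrix (wE a) (wE a) * P.transpose =
      (RM a * UM a * (RM a).transpose).submatrix (iE a) (iE a) := by
    rw [hP, Matrix.transpose_submatrix, Matrix.submatrix_mul_equiv, Matrix.submatrix_mul_equiv]
  let v : Fin a ⊕ Fin a → ℚ[X] := Sum.elim (fun m => eP m) (fun m => fP m)
  let s : Fin a ⊕ Fin a → ℚ := Sum.elim (fun m => 1) (fun m => -1)
  have hR : ∀ x p, RM a (iE a x) p = (v x).coeff p := by
    intro x p
    rcases x with m | m
    · simp [RM, iE, v, eP_coeff]
    · simp only [RM, iE, v, Matrix.of_apply, Equiv.coe_fn_mk, Sum.elim_inr, fP_coeff]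
      rw [if_neg (by omega)]
      congr 1; omega
  have hdeg : ∀ x, (v x).natDegree < 2 * a := by
    intro x
    rcases x with m | m
    · have := eP_deg m; simp only [v, Sum.elim_inl]; omega
    · have := fP_deg m; simp only [v, Sum.elim_inr]; omega
  have hcomp : ∀ x p, ((v x).comp (-1 - X)).coeff p = s x * (v x).coeff p := by
    intro x p
    rcases x with m | m
    · simp [v, s, eP_comp]
    · simp [v, s, fP_comp]
  have hE : ∀ x y, (P * (UM a).submatrix (wE a) (wE a) * P.transpose) x y
      = s y * ∑ p : Fin (2*a), (v x).coeff p * (v y).coeff p := by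
    intro x y
    rw [hM, Matrix.submatrix_apply, Matrix.mul_assoc, Matrix.mul_apply, Finset.mul_sum]
    refine Finset.sum_congr rfl fun p _ => ?_
    rw [Matrix.mul_apply]
    simp only [Matrix.transpose_apply]
    rw [Finset.sum_congr rfl (fun q _ => by rw [hR]), U_row a _ (hdeg y), hcomp, hR]
    ring
  have hsk := pf_skew_congr (P * (UM a).submatrix (wE a) (wE a) * P.transpose)
    (Matrix.fromBlocks 0 ((-2:ℚ) • DM a) 0 0) (by
      intro x y
      rw [hE, hE]
      have hDD : ∀ m l : Fin a, DM a m l = ∑ p : Fin (2*a), (eP m).coeff p * (fP l).coeff p := by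
        intro m l
        simp only [eP_coeff, fP_coeff]
        rw [Fin.sum_univ_eq_sum_range (fun p => ee m p * ff l p)]; rfl
      have hcm : ∀ x y, ∑ p : Fin (2*a), (v x).coeff p * (v y).coeff p = ∑ p : Fin (2*a), (v y).coeff p * (v x).coeff p :=
        fun x y => Finset.sum_congr rfl fun p _ => mul_comm _ _
      rcases x with m | m <;> rcases y with l | l
      · rw [hcm]; simp [s]
      · rw [hcm (Sum.inr l)]
        simp [s, v, hDD]; ring
      · rw [hcm (Sum.inr m)]
        simp [s, v, hDD]; ring
      · rw [hcm]; simp [s])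
  rw [hsk, pf_block, Matrix.det_smul] at hc
  have h2 := congrArg abs hc
  rw [abs_mul, abs_mul, abs_mul, hPdet, abs_pow] at h2
  simp only [Fintype.card_fin, Nat.abs_cast, abs_neg, Nat.abs_ofNat] at h2
  have h3 : (2:ℚ)^a ≠ 0 := by positivity
  apply mul_left_cancel₀ h3
  rw [← h2]; ring

open Classical in
theorem sum_abs (a : ℕ) :
   |∑ i : Fin a ↪o Fin (2*a), ∑ j : Fin a ↪o Fin (2*a),
      if (∀ k l, i k ≠ j l) then (Matrix.of fun k l => ((j l : ℕ).choose (i k) : ℚ)).det else 0| = |(DM a).det| := by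
  have h := pf_U a
  rw [pf_sorted] at h
  have e : ∀ i j : Fin a ↪o Fin (2*a), eps (Sum.elim i j) * ((UM a).submatrix i j).det
     = (∏ l : Fin a, (-1 : ℚ) ^ (a + l : ℕ)) * 
      if (∀ k l, i k ≠ j l) then (Matrix.of fun k l => ((j l : ℕ).choose (i k) : ℚ)).det else 0 := by
    intro i j
    split_ifs with hd
    · rw [← eps_val i j hd, mul_assoc]
      congr 1
      rw [← Matrix.det_mul_row]
      congr 1
    · push Not at hd
      obtain ⟨k, l, hkl⟩ := hd
      rw [eps_noninj _ (Sum.inl k) (Sum.inr l) (by simp) (by simpa using hkl)]; simp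
  simp only [e, ← Finset.mul_sum] at h
  rw [abs_mul, abs_mul, Finset.abs_prod] at h
  simp only [abs_pow, abs_neg, abs_one, one_pow, Finset.prod_const_one, one_mul, Nat.abs_cast] at h
  exact mul_left_cancel₀ (by positivity) h

end CSSC

namespace CSSC
open Finset

def Chain {a : ℕ} (α β : ℕ → ℤ → Prop) (T : ℕ) (x y : Fin a → ℤ) : Set (ℕ → Fin a → ℤ) :=
  {f | f 0 = x ∧ (∀ s, T ≤ s → f s = y) ∧ (∀ s, StrictMono (f s)) ∧
    ∀ s, s < T → ∀ m, (f (s+1) m = f s m ∧ α s (f s m)) ∨ (f (s+1) m = f s m - 1 ∧ β s (f s m))}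

open Classical in
noncomputable def PP : (ℕ → ℤ → Prop) → (ℕ → ℤ → Prop) → ℕ → ℤ → ℤ → ℚ
  | _, _, 0, p, q => if p = q then 1 else 0
  | α, β, T+1, p, q => (if α 0 p then PP (fun s => α (s+1)) (fun s => β (s+1)) T p q else 0)
      + (if β 0 p then PP (fun s => α (s+1)) (fun s => β (s+1)) T (p-1) q else 0)

theorem lgv_zero {a : ℕ} (α β : ℕ → ℤ → Prop) (x y : Fin a → ℤ) (hx : StrictMono x) (hy : StrictMono y) :
    Finite (Chain α β 0 x y) ∧ (Nat.card (Chain α β 0 x y) : ℚ) = (Matrix.of fun k l => PP α β 0 (x k) (y l)).det := by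
  by_cases h : x = y
  · subst h
    have e : Chain α β 0 x x = {fun _ => x} := by
      ext f
      simp only [Chain, Set.mem_ofPred_eq, Set.mem_singleton_iff]
      constructor
      · rintro ⟨_, h, _⟩; funext s; exact h s (Nat.zero_le _)
      · rintro rfl; simp [hx]
    rw [e]
    refine ⟨inferInstance, ?_⟩
    have : (Matrix.of fun k l => PP α β 0 (x k) (x l)) = 1 := by
      ext k l
      simp [PP, Matrix.one_apply, hx.injective.eq_iff]
    rw [this]; simp
  · have e : Chain α β 0 x y = ∅ := by
      ext f
      simp only [Chain, Set.mem_ofPred_eq, Set.mem_empty_iff_false, iff_false]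
      rintro ⟨h0, h1, _⟩
      exact h (h0.symm.trans (h1 0 le_rfl))
    rw [e]
    refine ⟨inferInstance, ?_⟩
    have : ∃ k, ∀ l, x k ≠ y l := by
      by_contra hc
      push Not at hc
      apply h
      apply (hx.range_inj hy).mp
      apply Set.eq_of_subset_of_ncard_le
      · rintro _ ⟨k, rfl⟩
        obtain ⟨l, hl⟩ := hc k
        exact ⟨l, hl.symm⟩
      · rw [← Set.image_univ, ← Set.image_univ, Set.ncard_image_of_injective _ hx.injective, Set.ncard_image_of_injective _ hy.injective]
      · exact Set.finite_range y
    obtain ⟨k, hk⟩ := this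
    rw [Matrix.det_eq_zero_of_row_eq_zero k]
    · simp
    · intro l; simp [PP, hk l]

def bz (b : Bool) : ℤ := if b then 1 else 0

open Classical in
theorem det_expand {a : ℕ} (α β : ℕ → ℤ → Prop) (T : ℕ) (x y : Fin a → ℤ) :
   (Matrix.of fun k l => PP α β (T+1) (x k) (y l)).det = ∑ e : Fin a → Bool,
     if (∀ m, if e m then β 0 (x m) else α 0 (x m)) then
       (Matrix.of fun k l => PP (fun s => α (s+1)) (fun s => β (s+1)) T (x k - bz (e k)) (y l)).det else 0 := by
  let w : Fin a → Bool → ℚ := fun m b => if (if b then β 0 (x m) else α 0 (x m)) then 1 else 0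
  let r : Fin a → Bool → Fin a → ℚ := fun m b l => PP (fun s => α (s+1)) (fun s => β (s+1)) T (x m - bz b) (y l)
  have h1 : (Matrix.of fun k l => PP α β (T+1) (x k) (y l)) = (fun k => ∑ b : Bool, (w k b • r k b) : Matrix (Fin a) (Fin a) ℚ) := by
    funext k l
    simp [PP, w, r, bz]
    split_ifs <;> simp [add_comm]
  rw [h1]
  have h2 := (Matrix.detRowAlternating (R := ℚ) (n := Fin a)).toMultilinearMap.map_sum (fun k b => w k b • r k b)
  refine h2.trans ?_
  refine Finset.sum_congr rfl fun e _ => ?_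
  have h3 := (Matrix.detRowAlternating (R := ℚ) (n := Fin a)).toMultilinearMap.map_smul_univ (fun k => w k (e k)) (fun k => r k (e k))
  refine h3.trans ?_
  have h4 : ∏ k, w k (e k) = if (∀ m, if e m then β 0 (x m) else α 0 (x m)) then 1 else 0 := by
    simp only [w]
    rw [Finset.prod_ite_zero]; simp
  rw [h4]
  split_ifs
  · rw [one_smul]; rfl
  · rw [zero_smul]

theorem lgv {a : ℕ} (T : ℕ) : ∀ (α β : ℕ → ℤ → Prop) (x y : Fin a → ℤ) (_ : StrictMono x) (_ : StrictMono y),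
    Finite (Chain α β T x y) ∧ (Nat.card (Chain α β T x y) : ℚ) = (Matrix.of fun k l => PP α β T (x k) (y l)).det := by
  induction T with
  | zero => exact fun α β x y hx hy => lgv_zero α β x y hx hy
  | succ T ih =>
    classical
    intro α β x y hx hy
    set α' := fun s => α (s+1) with hα
    set β' := fun s => β (s+1) with hβ
    let B : (Fin a → Bool) → Set (ℕ → Fin a → ℤ) := fun e =>
      {g | (∀ m, if e m then β 0 (x m) else α 0 (x m)) ∧ g ∈ Chain α' β' T (fun m => x m - bz (e m)) y}
    have hB : ∀ e, Finite (B e) ∧ (Nat.card (B e) : ℚ) = if (∀ m, if e m then β 0 (x m) else α 0 (x m)) then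
       (Matrix.of fun k l => PP α' β' T (x k - bz (e k)) (y l)).det else 0 := by
      intro e
      split_ifs with he
      · have : B e = Chain α' β' T (fun m => x m - bz (e m)) y := by
          ext g; simp only [B, Set.mem_ofPred_eq]; tauto
        rw [this]
        by_cases hs : StrictMono (fun m => x m - bz (e m))
        · exact ih α' β' _ y hs hy
        · have e0 : Chain α' β' T (fun m => x m - bz (e m)) y = ∅ := by
            ext g
            simp only [Chain, Set.mem_ofPred_eq, Set.mem_empty_iff_false, iff_false]
            rintro ⟨h0, _, h1, _⟩
            exact hs (h0 ▸ h1 0)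
          rw [e0]
          refine ⟨inferInstance, ?_⟩
          simp only [StrictMono, not_forall] at hs
          obtain ⟨k, l, hkl, hn⟩ := hs
          have hxx := hx hkl
          have heq : x k - bz (e k) = x l - bz (e l) := by
            have h1 : 0 ≤ bz (e k) ∧ bz (e k) ≤ 1 := by unfold bz; split_ifs <;> simp
            have h2 : 0 ≤ bz (e l) ∧ bz (e l) ≤ 1 := by unfold bz; split_ifs <;> simp
            omega
          rw [Matrix.det_zero_of_row_eq hkl.ne]
          · simp
          · funext q; simp [heq]
      · have : B e = ∅ := by
          ext g; simp only [B, Set.mem_ofPred_eq, Set.mem_empty_iff_false, iff_false]; tauto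
        rw [this]; exact ⟨inferInstance, by simp⟩
    have hfin : ∀ e, Finite (B e) := fun e => (hB e).1
    let φ : (Σ e, B e) → Chain α β (T+1) x y := fun p =>
      ⟨fun s => Nat.casesOn s x (fun s => p.2.1 s), by
        obtain ⟨e, g, he, h0, h1, h2, h3⟩ := p
        refine ⟨rfl, ?_, ?_, ?_⟩
        · intro s hs
          rcases s with _ | s
          · omega
          · exact h1 s (by omega)
        · intro s
          rcases s with _ | s
          · exact hx
          · exact h2 s
        · intro s hs m
          rcases s with _ | s
          · have := he m
            simp only [h0]
            cases hem : e m
            · left; simp [hem] at this; simp [bz, this]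
            · right; simp [hem] at this; simp [bz, this]
          · exact h3 s (by omega) m⟩
    have hφ : Function.Bijective φ := by
      constructor
      · rintro ⟨e, g, he, h0, h1⟩ ⟨e', g', he', h0', h1'⟩ hh
        have hg : g = g' := by
          funext s
          exact congrFun (congrArg Subtype.val hh) (s+1)
        subst hg
        have : e = e' := by
          funext m
          have := congrFun (h0.symm.trans h0') m
          simp only [bz] at this
          cases hem : e m <;> cases hem2 : e' m <;> simp [hem, hem2] at this ⊢ <;> omega
        subst this
        rfl
      · rintro ⟨f, h0, h1, h2, h3⟩
        refine ⟨⟨fun m => decide (f 1 m ≠ x m), ⟨fun s => f (s+1), ?_, ?_, ?_, ?_, ?_⟩⟩, ?_⟩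
        · intro m
          have := h3 0 (by omega) m
          simp only [h0, zero_add] at this
          by_cases hm : f 1 m = x m
          · simp [hm] at this ⊢; rcases this with h | h
            · exact h
            · omega
          · simp [hm] at this ⊢; exact this.2
        · funext m
          have := h3 0 (by omega) m
          simp only [h0, zero_add] at this
          by_cases hm : f 1 m = x m
          · simp [hm, bz]
          · simp [hm] at this; simp [bz, this]
        · intro s hs; exact h1 (s+1) (by omega)
        · intro s; exact h2 (s+1)
        · intro s hs m; exact h3 (s+1) (by omega) m
        · apply Subtype.ext
          funext s
          rcases s with _ | s
          · exact h0.symm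
          · rfl
    refine ⟨Finite.of_surjective φ hφ.2, ?_⟩
    rw [← Nat.card_eq_of_bijective φ hφ, Nat.card_sigma, det_expand]
    push_cast
    exact Finset.sum_congr rfl fun e _ => (hB e).2
end CSSC

namespace CSSC
open Finset

def αc : ℕ → ℤ → Prop := fun _ p => 0 ≤ p
def βc : ℕ → ℤ → Prop := fun _ _ => True
def αt : ℕ → ℤ → Prop := fun _ _ => True
def βt (c : ℕ) : ℕ → ℤ → Prop := fun s p => (c : ℤ) + s + 2 ≤ p

theorem PPc_succ (T : ℕ) (p y : ℤ) : PP αc βc (T+1) p y = (if 0 ≤ p then PP αc βc T p y else 0) + PP αc βc T (p-1) y := by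
  rw [PP]
  have e1 : (fun s => αc (s+1)) = αc := rfl
  have e2 : (fun s => βc (s+1)) = βc := rfl
  rw [e1, e2, if_pos (show βc 0 p from trivial)]
  congr 1
  by_cases h : 0 ≤ p
  · rw [if_pos h, if_pos (show αc 0 p from h)]
  · rw [if_neg h, if_neg (show ¬ αc 0 p from h)]

theorem PPc_low (T : ℕ) : ∀ p y : ℤ, y < p - T → PP αc βc T p y = 0 := by
  induction T with
  | zero => intro p y h; simp only [PP]; rw [if_neg]; simp at h; omega
  | succ T ih =>
    intro p y h
    push_cast at h
    rw [PPc_succ, ih p y (by omega), ih (p-1) y (by omega)]; simp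

theorem PPc_neg (T : ℕ) : ∀ p y : ℤ, p < 0 → PP αc βc T p y = if y = p - T then 1 else 0 := by
  induction T with
  | zero => intro p y h; simp only [PP]; congr 1; simp; exact eq_comm
  | succ T ih =>
    intro p y h
    rw [PPc_succ, ih (p-1) y (by omega), if_neg (by omega)]
    push_cast
    rw [show p - 1 - T = p - (T + 1) by ring]; simp

theorem PPc_eq (T : ℕ) : ∀ p j : ℕ, j < T → PP αc βc T p (j - T) = (j.choose p : ℚ) := by
  induction T with
  | zero => intro p j h; omega
  | succ T ih =>
    intro p j h
    rw [PPc_succ, if_pos (by omega)]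
    push_cast
    rcases j with _ | j
    · rw [PPc_low T p _ (by push_cast; omega)]
      rcases p with _ | p
      · rw [PPc_neg _ _ _ (by omega), if_pos (by push_cast; ring)]; simp
      · rw [PPc_low T _ _ (by push_cast; omega)]; simp
    · rw [show (((j+1 : ℕ) : ℤ) - (T + 1)) = j - T by push_cast; ring, ih p j (by omega)]
      rcases p with _ | p
      · rw [PPc_neg _ _ _ (by omega), if_neg (by push_cast; omega)]; simp
      · rw [show (((p+1 : ℕ) : ℤ) - 1) = p by push_cast; ring, ih p j (by omega), Nat.choose_succ_succ]
        push_cast; ring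

theorem PPt_eq (T : ℕ) : ∀ c p m : ℕ, m ≤ c + T → PP αt (βt c) T p m = if m ≤ p then ((m-c).choose (p-m) : ℚ) else 0 := by
  induction T with
  | zero =>
    intro c p m h
    simp only [PP, Nat.cast_inj]
    rw [show m - c = 0 by omega]
    by_cases hpm : p = m
    · simp [hpm]
    · rw [if_neg hpm]
      split_ifs
      · rw [Nat.choose_eq_zero_of_lt (by omega)]; simp
      · rfl
  | succ T ih =>
    intro c p m h
    rw [PP]
    have e : (fun s => βt c (s+1)) = βt (c+1) := by
      funext s p; simp only [βt]; push_cast; rw [show (c:ℤ) + (s+1) + 2 = c + 1 + s + 2 by ring]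
    have e1 : (fun s => αt (s+1)) = αt := rfl
    rw [e, e1, if_pos (show αt 0 p from trivial), ih (c+1) p m (by omega)]
    by_cases hp : c + 2 ≤ p
    · obtain ⟨q, rfl⟩ : ∃ q, p = q + 1 := ⟨p-1, by omega⟩
      rw [if_pos (show βt c 0 ((q+1 : ℕ) : ℤ) by unfold βt; push_cast; omega), show (((q+1 : ℕ) : ℤ) - 1) = q by push_cast; ring, ih (c+1) q m (by omega)]
      by_cases hmc : c + 1 ≤ m
      · obtain ⟨d, rfl⟩ := Nat.exists_eq_add_of_le hmc
        rw [show c + 1 + d - (c+1) = d by omega, show c+1+d-c = d+1 by omega]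
        by_cases hq : c+1+d ≤ q
        · rw [if_pos (by omega), if_pos hq, if_pos (by omega), show q + 1 - (c+1+d) = (q - (c+1+d)) + 1 by omega, Nat.choose_succ_succ]
          push_cast; ring
        · rw [if_neg hq]
          split_ifs
          · rw [show q + 1 - (c+1+d) = 0 by omega]; simp
          · simp
      · rw [show m - (c+1) = 0 by omega, show m - c = 0 by omega]
        rw [if_pos (by omega), if_pos (by omega), Nat.choose_eq_zero_of_lt (show 0 < q + 1 - m by omega),
          Nat.choose_eq_zero_of_lt (show 0 < q - m by omega)]
        simp
    · rw [if_neg (show ¬ βt c 0 (p : ℤ) by unfold βt; push_cast; omega), add_zero]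
      split_ifs with hm
      · by_cases h1 : m = p
        · subst h1; simp
        · rw [Nat.choose_eq_zero_of_lt (by omega), Nat.choose_eq_zero_of_lt (by omega)]
      · rfl

/-- data for CSSC -/
abbrev CData (a : ℕ) := Σ p : {p : (Fin a ↪o Fin (2*a)) × (Fin a ↪o Fin (2*a)) // ∀ k l, p.1 k ≠ p.2 l},
  Chain αc βc (2*a) (fun k => ((p.1.1 k : ℕ) : ℤ)) (fun k => ((p.1.2 k : ℕ) : ℤ) - (2*a : ℕ))

abbrev TData (a : ℕ) := Σ S : Fin a ↪o Fin (2*a),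
  Chain αt (βt 0) a (fun k => ((S k : ℕ) : ℤ)) (fun k => ((k : ℕ) : ℤ))

theorem card_TData (a : ℕ) : (Nat.card (TData a) : ℚ) = tau (TM a) := by
  have hl : ∀ S : Fin a ↪o Fin (2*a), Finite (Chain αt (βt 0) a (fun k => ((S k : ℕ) : ℤ)) (fun k => ((k : ℕ) : ℤ))) ∧
     (Nat.card (Chain αt (βt 0) a (fun k => ((S k : ℕ) : ℤ)) (fun k => ((k : ℕ) : ℤ))) : ℚ) = ((TM a).submatrix id S).det := by
    intro S
    have := lgv a αt (βt 0) (fun k => ((S k : ℕ) : ℤ)) (fun k : Fin a => ((k : ℕ) : ℤ))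
      (fun k l h => by simpa using h) (fun k l h => by simpa using h)
    refine ⟨this.1, this.2.trans ?_⟩
    rw [← Matrix.det_transpose]
    congr 1
    ext k l
    simp only [Matrix.transpose_apply, Matrix.of_apply, Matrix.submatrix_apply, TM, id]
    rw [PPt_eq a 0 _ _ (by omega)]
    rfl
  have : ∀ S : Fin a ↪o Fin (2*a), Finite (Chain αt (βt 0) a (fun k => ((S k : ℕ) : ℤ)) (fun k => ((k : ℕ) : ℤ))) := fun S => (hl S).1
  rw [Nat.card_sigma]
  push_cast
  unfold tau
  exact Finset.sum_congr rfl fun S _ => (hl S).2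

theorem card_CData (a : ℕ) : (Nat.card (CData a) : ℚ) = |(DM a).det| := by
  classical
  have hl : ∀ i j : Fin a ↪o Fin (2*a), Finite (Chain αc βc (2*a) (fun k => ((i k : ℕ) : ℤ)) (fun k => ((j k : ℕ) : ℤ) - (2*a : ℕ))) ∧
     (Nat.card (Chain αc βc (2*a) (fun k => ((i k : ℕ) : ℤ)) (fun k => ((j k : ℕ) : ℤ) - (2*a : ℕ))) : ℚ) = (Matrix.of fun k l => ((j l : ℕ).choose (i k) : ℚ)).det := by
    intro i j
    have := lgv (2*a) αc βc (fun k => ((i k : ℕ) : ℤ)) (fun k => ((j k : ℕ) : ℤ) - (2*a : ℕ))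
      (fun k l h => by simpa using h) (fun k l h => by simpa using h)
    refine ⟨this.1, this.2.trans ?_⟩
    congr 1
    ext k l
    simp only [Matrix.of_apply]
    rw [PPc_eq (2*a) _ _ (by omega)]
  have : ∀ p : {p : (Fin a ↪o Fin (2*a)) × (Fin a ↪o Fin (2*a)) // ∀ k l, p.1 k ≠ p.2 l}, Finite (Chain αc βc (2*a) (fun k => ((p.1.1 k : ℕ) : ℤ)) (fun k => ((p.1.2 k : ℕ) : ℤ) - (2*a : ℕ))) := fun p => (hl p.1.1 p.1.2).1
  rw [← sum_abs]
  have h2 : (Nat.card (CData a) : ℚ) = ∑ i : Fin a ↪o Fin (2*a), ∑ j : Fin a ↪o Fin (2*a),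
      if (∀ k l, i k ≠ j l) then (Matrix.of fun k l => ((j l : ℕ).choose (i k) : ℚ)).det else 0 := by
    rw [Nat.card_sigma]
    push_cast
    rw [← Fintype.sum_prod_type' (f := fun i j : Fin a ↪o Fin (2*a) => if (∀ k l, i k ≠ j l) then (Matrix.of fun k l => ((j l : ℕ).choose (i k) : ℚ)).det else 0),
      ← Finset.sum_filter, Finset.sum_subtype (p := fun p : (Fin a ↪o Fin (2*a)) × (Fin a ↪o Fin (2*a)) => ∀ k l, p.1 k ≠ p.2 l)]
    · exact Finset.sum_congr rfl fun p _ => (hl p.1.1 p.1.2).2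
    · intro p; simp
  rw [← h2, Nat.abs_cast]

theorem card_main (a : ℕ) : Nat.card (CData a) = Nat.card (TData a) ^ 2 := by
  have h1 := card_CData a
  rw [← tau_sq_D, ← card_TData, abs_of_nonneg (by positivity)] at h1
  exact_mod_cast h1
end CSSC

namespace CSSC

structure GoodR (n : ℕ) (R : ℕ → ℕ → ℕ → Prop) : Prop where
  supp : ∀ {x y z}, R x y z → x < n ∧ y < n ∧ z < n
  low : ∀ {x y z x' y' z'}, R x y z → x' ≤ x → y' ≤ y → z' ≤ z → R x' y' z'
  cyc : ∀ x y z, R x y z ↔ R y z x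
  comp : ∀ {x y z}, x < n → y < n → z < n → (R x y z ↔ ¬ R (n-1-x) (n-1-y) (n-1-z))

structure GoodA (n : ℕ) (A : ℕ → ℕ → ℕ → Prop) : Prop where
  supp : ∀ {x y z}, A x y z → x ≤ y ∧ y ≤ z ∧ z < n
  low : ∀ {x y z x' y' z'}, A x y z → x' ≤ x → y' ≤ y → z' ≤ z → x' ≤ y' → y' ≤ z' → A x' y' z'
  gl : ∀ {x z}, x ≤ z → z < n → (A x x z ↔ ¬ A (n-1-z) (n-1-x) (n-1-x))

def SymA (n : ℕ) (A : ℕ → ℕ → ℕ → Prop) : Prop :=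
  ∀ {x y z}, x ≤ y → y ≤ z → z < n → (A x y z ↔ ¬ A (n-1-z) (n-1-y) (n-1-x))

def pmem {n : ℕ} (T : Set (Fin n × Fin n × Fin n)) (x y z : ℕ) : Prop :=
  ∃ (hx : x < n) (hy : y < n) (hz : z < n), ((⟨x, hx⟩, ⟨y, hy⟩, ⟨z, hz⟩) : Fin n × Fin n × Fin n) ∈ T

def toSet (n : ℕ) (R : ℕ → ℕ → ℕ → Prop) : Set (Fin n × Fin n × Fin n) := {p | R p.1 p.2.1 p.2.2}

theorem pmem_fin {n : ℕ} (T : Set (Fin n × Fin n × Fin n)) (x y z : Fin n) :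
    pmem T x y z ↔ (x, y, z) ∈ T := by
  constructor
  · rintro ⟨_, _, _, h⟩; exact h
  · intro h; exact ⟨x.2, y.2, z.2, h⟩

theorem toSet_pmem {n : ℕ} (T : Set (Fin n × Fin n × Fin n)) : toSet n (pmem T) = T := by
  ext ⟨x, y, z⟩; exact pmem_fin T x y z

theorem pmem_toSet {n : ℕ} (R : ℕ → ℕ → ℕ → Prop) (h : ∀ {x y z}, R x y z → x < n ∧ y < n ∧ z < n) :
    pmem (toSet n R) = R := by
  funext x y z
  apply propext
  constructor
  · rintro ⟨_, _, _, h⟩; exact h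
  · intro hR
    obtain ⟨h1, h2, h3⟩ := h hR
    exact ⟨h1, h2, h3, hR⟩

theorem good_pmem {n : ℕ} (T : Set (Fin n × Fin n × Fin n))
    (h : IsLowerSet T ∧ ppCycle T = T ∧ ppComplement T = T) : GoodR n (pmem T) := by
  obtain ⟨hl, hc, hk⟩ := h
  have hc' : ∀ x y z : Fin n, (x, y, z) ∈ T ↔ (y, z, x) ∈ T := by
    intro x y z
    conv_lhs => rw [← hc]
    rfl
  have hk' : ∀ x y z : Fin n, (x, y, z) ∈ T ↔ (x.rev, y.rev, z.rev) ∉ T := by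
    intro x y z
    conv_lhs => rw [← hk]
    rfl
  refine ⟨?_, ?_, ?_, ?_⟩
  · rintro x y z ⟨h1, h2, h3, _⟩; exact ⟨h1, h2, h3⟩
  · rintro x y z x' y' z' ⟨h1, h2, h3, h⟩ hx hy hz
    exact ⟨by omega, by omega, by omega, hl (show _ ≤ _ from ⟨hx, hy, hz⟩) h⟩
  · intro x y z
    constructor
    · rintro ⟨h1, h2, h3, h⟩; exact ⟨h2, h3, h1, (hc' _ _ _).mp h⟩
    · rintro ⟨h1, h2, h3, h⟩; exact ⟨h3, h1, h2, (hc' _ _ _).mpr h⟩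
  · intro x y z hx hy hz
    have e := hk' ⟨x, hx⟩ ⟨y, hy⟩ ⟨z, hz⟩
    rw [← pmem_fin, ← pmem_fin] at e
    simp only [Fin.val_rev] at e
    rw [show n - 1 - x = n - (x+1) by omega, show n - 1 - y = n - (y+1) by omega, show n - 1 - z = n - (z+1) by omega]
    exact e

theorem good_toSet {n : ℕ} (R : ℕ → ℕ → ℕ → Prop) (h : GoodR n R) :
    IsLowerSet (toSet n R) ∧ ppCycle (toSet n R) = toSet n R ∧ ppComplement (toSet n R) = toSet n R := by
  refine ⟨?_, ?_, ?_⟩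
  · rintro ⟨x, y, z⟩ ⟨x', y', z'⟩ hle hm
    exact h.low hm hle.1 hle.2.1 hle.2.2
  · ext ⟨x, y, z⟩
    exact (h.cyc x y z).symm
  · ext ⟨x, y, z⟩
    have e := h.comp x.2 y.2 z.2
    change ¬ R x.rev y.rev z.rev ↔ R x y z
    rw [e]
    simp only [Fin.val_rev]
    rw [show n - 1 - (x:ℕ) = n - (x+1) by omega, show n - 1 - (y:ℕ) = n - (y+1) by omega, show n - 1 - (z:ℕ) = n - (z+1) by omega]

theorem transpose_iff {n : ℕ} (T : Set (Fin n × Fin n × Fin n)) :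
    ppTranspose T = T ↔ ∀ x y z, pmem T x y z ↔ pmem T y x z := by
  constructor
  · intro h
    have h' : ∀ x y z : Fin n, (x, y, z) ∈ T → (y, x, z) ∈ T := by
      intro x y z hm
      rw [← h]; exact hm
    intro x y z
    constructor
    · rintro ⟨h1, h2, h3, hm⟩; exact ⟨h2, h1, h3, h' _ _ _ hm⟩
    · rintro ⟨h1, h2, h3, hm⟩; exact ⟨h2, h1, h3, h' _ _ _ hm⟩
  · intro h
    ext ⟨x, y, z⟩
    have := h x y z
    rw [pmem_fin, pmem_fin] at this
    exact this.symm

def res (R : ℕ → ℕ → ℕ → Prop) (x y z : ℕ) : Prop := x ≤ y ∧ y ≤ z ∧ R x y z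

theorem res_iff (R : ℕ → ℕ → ℕ → Prop) {x y z : ℕ} (h : x ≤ y) (h2 : y ≤ z) : res R x y z ↔ R x y z := by
  simp [res, h, h2]

theorem good_res {n : ℕ} {R : ℕ → ℕ → ℕ → Prop} (h : GoodR n R) : GoodA n (res R) := by
  refine ⟨?_, ?_, ?_⟩
  · rintro x y z ⟨h1, h2, h3⟩; exact ⟨h1, h2, (h.supp h3).2.2⟩
  · rintro x y z x' y' z' ⟨h1, h2, h3⟩ hx hy hz h4 h5
    exact ⟨h4, h5, h.low h3 hx hy hz⟩
  · intro x z hxz hz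
    rw [res_iff R le_rfl hxz, res_iff R (by omega) le_rfl, h.comp (by omega) (by omega) hz,
      h.cyc (n-1-z)]

theorem res_inj {n : ℕ} {R R' : ℕ → ℕ → ℕ → Prop} (h : GoodR n R) (h' : GoodR n R') (e : res R = res R') : R = R' := by
  have key : ∀ {x y z}, x ≤ y → y ≤ z → (R x y z ↔ R' x y z) := by
    intro x y z h1 h2
    rw [← res_iff R h1 h2, ← res_iff R' h1 h2, e]
  have key2 : ∀ {x y z}, z ≤ y → y ≤ x → x < n → (R x y z ↔ R' x y z) := by
    intro x y z h1 h2 h3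
    rw [h.comp (by omega) (by omega) (by omega), h'.comp (by omega) (by omega) (by omega),
      key (by omega) (by omega)]
  funext x y z
  apply propext
  by_cases hn : x < n ∧ y < n ∧ z < n
  · obtain ⟨hx, hy, hz⟩ := hn
    rcases le_total x y with h1 | h1 <;> rcases le_total y z with h2 | h2 <;> rcases le_total x z with h3 | h3
    · exact key h1 h2
    · exact key h1 h2
    · rw [h.cyc, h'.cyc]; exact key2 h3 h2 hy
    · rw [h.cyc, h'.cyc, h.cyc, h'.cyc]; exact key h3 h1
    · rw [h.cyc, h'.cyc, h.cyc, h'.cyc]; exact key2 h1 h3 hz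
    · rw [h.cyc, h'.cyc]; exact key h2 h3
    · exact key2 h2 h1 hx
    · exact key2 h2 h1 hx
  · constructor
    · intro hm; exact absurd (h.supp hm) hn
    · intro hm; exact absurd (h'.supp hm) hn

theorem sym_res {n : ℕ} {R : ℕ → ℕ → ℕ → Prop} (h : GoodR n R) :
    (∀ x y z, R x y z ↔ R y x z) ↔ SymA n (res R) := by
  constructor
  · intro hs x y z h1 h2 h3
    rw [res_iff R h1 h2, res_iff R (by omega) (by omega), h.comp (by omega) (by omega) h3]
    rw [hs, h.cyc, h.cyc, hs, h.cyc]
  · intro hs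
    -- key: sorted versions agree with reversed
    have key : ∀ {x y z}, x ≤ y → y ≤ z → z < n → (R x y z ↔ R z y x) := by
      intro x y z h1 h2 h3
      have := hs h1 h2 h3
      rw [res_iff R h1 h2, res_iff R (by omega) (by omega)] at this
      rw [this, h.comp (x := z) (by omega) (by omega) (by omega)]
    intro x y z
    by_cases hn : x < n ∧ y < n ∧ z < n
    · obtain ⟨hx, hy, hz⟩ := hn
      rcases le_total x y with h1 | h1 <;> rcases le_total y z with h2 | h2 <;> rcases le_total x z with h3 | h3
      · rw [key h1 h2 hz, h.cyc]
      · rw [key h1 h2 hz, h.cyc]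
      · rw [h.cyc, ← key h3 h2 hy, h.cyc, h.cyc y, h.cyc x]
      · rw [h.cyc, h.cyc, key h3 h1 hy]
      · rw [h.cyc, h.cyc, ← key h1 h3 hz]
      · rw [h.cyc, key h2 h3 hx]; exact (h.cyc _ _ _).symm
      · rw [← key h2 h1 hx, h.cyc]
      · rw [← key h2 h1 hx, h.cyc]
    · constructor
      · intro hm; exact absurd (h.supp hm) hn
      · intro hm; have := h.supp hm; exact absurd ⟨this.2.1, this.1, this.2.2⟩ hn

def extA (n : ℕ) (A : ℕ → ℕ → ℕ → Prop) (x y z : ℕ) : Prop :=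
  (x < n ∧ y < n ∧ z < n) ∧
  ((x ≤ y ∧ y ≤ z ∧ A x y z) ∨ (y ≤ z ∧ z ≤ x ∧ A y z x) ∨ (z ≤ x ∧ x ≤ y ∧ A z x y) ∨
   (z ≤ y ∧ y ≤ x ∧ ¬ A (n-1-x) (n-1-y) (n-1-z)) ∨ (x ≤ z ∧ z ≤ y ∧ ¬ A (n-1-y) (n-1-z) (n-1-x)) ∨
   (y ≤ x ∧ x ≤ z ∧ ¬ A (n-1-z) (n-1-x) (n-1-y)))

theorem ext_cyc (n : ℕ) (A : ℕ → ℕ → ℕ → Prop) (x y z : ℕ) : extA n A x y z ↔ extA n A y z x := by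
  have key : ∀ x y z, extA n A x y z → extA n A y z x := by
    rintro x y z ⟨⟨h1, h2, h3⟩, h | h | h | h | h | h⟩
    · exact ⟨⟨h2, h3, h1⟩, Or.inr (Or.inr (Or.inl h))⟩
    · exact ⟨⟨h2, h3, h1⟩, Or.inl h⟩
    · exact ⟨⟨h2, h3, h1⟩, Or.inr (Or.inl h)⟩
    · exact ⟨⟨h2, h3, h1⟩, Or.inr (Or.inr (Or.inr (Or.inr (Or.inr h))))⟩
    · exact ⟨⟨h2, h3, h1⟩, Or.inr (Or.inr (Or.inr (Or.inl h)))⟩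
    · exact ⟨⟨h2, h3, h1⟩, Or.inr (Or.inr (Or.inr (Or.inr (Or.inl h))))⟩
  exact ⟨key _ _ _, fun h => key _ _ _ (key _ _ _ h)⟩

theorem ext_even {n : ℕ} {A : ℕ → ℕ → ℕ → Prop} (h : GoodA n A) {x y z : ℕ} (h1 : x ≤ y) (h2 : y ≤ z) (h3 : z < n) :
    extA n A x y z ↔ A x y z := by
  constructor
  · rintro ⟨_, ⟨_, _, hA⟩ | ⟨_, _, hA⟩ | ⟨_, _, hA⟩ | ⟨_, _, hA⟩ | ⟨_, _, hA⟩ | ⟨_, _, hA⟩⟩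
    · exact hA
    · obtain rfl : y = x := by omega
      obtain rfl : y = z := by omega
      exact hA
    · obtain rfl : y = x := by omega
      obtain rfl : y = z := by omega
      exact hA
    · obtain rfl : y = x := by omega
      obtain rfl : y = z := by omega
      exact (h.gl le_rfl h3).mpr hA
    · obtain rfl : y = z := by omega
      have := h.gl (x := n-1-y) (z := n-1-x) (by omega) (by omega)
      rw [show n-1-(n-1-x) = x by omega, show n-1-(n-1-y) = y by omega] at this
      tauto
    · obtain rfl : x = y := by omega
      exact (h.gl h2 h3).mpr hA
  · intro hA; exact ⟨⟨by omega, by omega, h3⟩, Or.inl ⟨h1, h2, hA⟩⟩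

theorem ext_odd {n : ℕ} {A : ℕ → ℕ → ℕ → Prop} (h : GoodA n A) {x y z : ℕ} (h1 : z ≤ y) (h2 : y ≤ x) (h3 : x < n) :
    extA n A x y z ↔ ¬ A (n-1-x) (n-1-y) (n-1-z) := by
  constructor
  · rintro ⟨_, ⟨_, _, hA⟩ | ⟨_, _, hA⟩ | ⟨_, _, hA⟩ | ⟨_, _, hA⟩ | ⟨_, _, hA⟩ | ⟨_, _, hA⟩⟩
    · obtain rfl : y = x := by omega
      obtain rfl : y = z := by omega
      exact (h.gl le_rfl h3).mp hA
    · obtain rfl : y = z := by omega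
      exact (h.gl h2 h3).mp hA
    · obtain rfl : x = y := by omega
      have := h.gl (x := n-1-x) (z := n-1-z) (by omega) (by omega)
      rw [show n-1-(n-1-x) = x by omega, show n-1-(n-1-z) = z by omega] at this
      tauto
    · exact hA
    · obtain rfl : y = x := by omega
      obtain rfl : y = z := by omega
      exact hA
    · obtain rfl : y = x := by omega
      obtain rfl : y = z := by omega
      exact hA
  · intro hA; exact ⟨⟨by omega, by omega, by omega⟩, Or.inr (Or.inr (Or.inr (Or.inl ⟨h1, h2, hA⟩)))⟩

theorem ext_dz {n : ℕ} {A : ℕ → ℕ → ℕ → Prop} (h : GoodA n A) {x y z : ℕ} (hm : extA n A x y (z+1)) :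
    extA n A x y z := by
  obtain ⟨hx, hy, hz⟩ := hm.1
  rcases le_total x y with h1 | h1
  · rcases le_or_gt (z+1) x with h2 | h2
    · rw [ext_cyc, ext_cyc, ext_even h (by omega) (by omega) (by omega)] at hm ⊢
      exact h.low hm (by omega) (by omega) (by omega) (by omega) (by omega)
    · rcases le_or_gt (z+1) y with h4 | h4
      · rw [ext_cyc, ext_odd h (by omega) (by omega) (by omega)] at hm ⊢
        intro hA; apply hm
        exact h.low hA (by omega) (by omega) (by omega) (by omega) (by omega)
      · rw [ext_even h (by omega) (by omega) (by omega)] at hm ⊢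
        exact h.low hm (by omega) (by omega) (by omega) (by omega) (by omega)
  · rcases le_or_gt (z+1) y with h2 | h2
    · rw [ext_odd h (by omega) (by omega) (by omega)] at hm ⊢
      intro hA; apply hm
      exact h.low hA (by omega) (by omega) (by omega) (by omega) (by omega)
    · rcases le_or_gt (z+1) x with h4 | h4
      · rw [ext_cyc, ext_even h (by omega) (by omega) (by omega)] at hm ⊢
        exact h.low hm (by omega) (by omega) (by omega) (by omega) (by omega)
      · rw [ext_cyc, ext_cyc, ext_odd h (by omega) (by omega) (by omega)] at hm ⊢
        intro hA; apply hm
        exact h.low hA (by omega) (by omega) (by omega) (by omega) (by omega)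

theorem ext_lz {n : ℕ} {A : ℕ → ℕ → ℕ → Prop} (h : GoodA n A) {x y z z' : ℕ} (hm : extA n A x y z) (hz : z' ≤ z) :
    extA n A x y z' := by
  induction z, hz using Nat.le_induction with
  | base => exact hm
  | succ k _ ih => exact ih (ext_dz h hm)

theorem good_ext {n : ℕ} {A : ℕ → ℕ → ℕ → Prop} (h : GoodA n A) : GoodR n (extA n A) := by
  refine ⟨fun hm => hm.1, ?_, ext_cyc n A, ?_⟩
  · intro x y z x' y' z' hm hx hy hz
    have h1 := ext_lz h hm hz
    rw [ext_cyc] at h1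
    have h2 := ext_lz h h1 hx
    rw [ext_cyc] at h2
    have h3 := ext_lz h h2 hy
    rw [ext_cyc] at h3
    exact h3
  · have key : ∀ {x y z}, x ≤ y → y ≤ z → z < n → (extA n A x y z ↔ ¬ extA n A (n-1-x) (n-1-y) (n-1-z)) := by
      intro x y z h1 h2 h3
      rw [ext_even h h1 h2 h3, ext_odd h (by omega) (by omega) (by omega),
        show n-1-(n-1-x) = x by omega, show n-1-(n-1-y) = y by omega, show n-1-(n-1-z) = z by omega, not_not]
    have key2 : ∀ {x y z}, z ≤ y → y ≤ x → x < n → (extA n A x y z ↔ ¬ extA n A (n-1-x) (n-1-y) (n-1-z)) := by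
      intro x y z h1 h2 h3
      rw [ext_odd h h1 h2 h3, ext_even h (by omega) (by omega) (by omega)]
    intro x y z hx hy hz
    rcases le_total x y with h1 | h1 <;> rcases le_total y z with h2 | h2 <;> rcases le_total x z with h3 | h3
    · exact key h1 h2 hz
    · exact key h1 h2 hz
    · rw [ext_cyc, ext_cyc n A (n-1-x)]; exact key2 h3 h2 hy
    · rw [ext_cyc, ext_cyc n A (n-1-x), ext_cyc, ext_cyc n A (n-1-y)]; exact key h3 h1 hy
    · rw [ext_cyc, ext_cyc n A (n-1-x), ext_cyc, ext_cyc n A (n-1-y)]; exact key2 h1 h3 hz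
    · rw [ext_cyc, ext_cyc n A (n-1-x)]; exact key h2 h3 hx
    · exact key2 h2 h1 hx
    · exact key2 h2 h1 hx

theorem res_ext {n : ℕ} {A : ℕ → ℕ → ℕ → Prop} (h : GoodA n A) : res (extA n A) = A := by
  funext x y z
  apply propext
  constructor
  · rintro ⟨h1, h2, hm⟩
    exact (ext_even h h1 h2 hm.1.2.2).mp hm
  · intro hA
    obtain ⟨h1, h2, h3⟩ := h.supp hA
    exact ⟨h1, h2, (ext_even h h1 h2 h3).mpr hA⟩

theorem card_C (n : ℕ) : Nat.card {T : Set (Fin n × Fin n × Fin n) //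
        IsLowerSet T ∧ ppCycle T = T ∧ ppComplement T = T} = Nat.card {A // GoodA n A} := by
  apply Nat.card_eq_of_bijective (fun T => ⟨res (pmem T.1), good_res (good_pmem T.1 T.2)⟩)
  constructor
  · rintro ⟨T, hT⟩ ⟨T', hT'⟩ e
    have := res_inj (good_pmem T hT) (good_pmem T' hT') (congrArg Subtype.val e)
    apply Subtype.ext
    change T = T'
    rw [← toSet_pmem T, this, toSet_pmem]
  · rintro ⟨A, hA⟩
    refine ⟨⟨toSet n (extA n A), good_toSet _ (good_ext hA)⟩, ?_⟩
    apply Subtype.ext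
    change res (pmem (toSet n (extA n A))) = A
    rw [pmem_toSet _ (good_ext hA).supp, res_ext hA]

theorem card_T (n : ℕ) : Nat.card {T : Set (Fin n × Fin n × Fin n) //
        IsLowerSet T ∧ ppTranspose T = T ∧ ppCycle T = T ∧ ppComplement T = T} = Nat.card {A // GoodA n A ∧ SymA n A} := by
  apply Nat.card_eq_of_bijective (fun T => ⟨res (pmem T.1), good_res (good_pmem T.1 ⟨T.2.1, T.2.2.2⟩),
    (sym_res (good_pmem T.1 ⟨T.2.1, T.2.2.2⟩)).mp ((transpose_iff _).mp T.2.2.1)⟩)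
  constructor
  · rintro ⟨T, hT⟩ ⟨T', hT'⟩ e
    have := res_inj (good_pmem T ⟨hT.1, hT.2.2⟩) (good_pmem T' ⟨hT'.1, hT'.2.2⟩) (congrArg Subtype.val e)
    apply Subtype.ext
    change T = T'
    rw [← toSet_pmem T, this, toSet_pmem]
  · rintro ⟨A, hA, hs⟩
    have hg := good_toSet _ (good_ext hA)
    have hp := pmem_toSet _ (good_ext hA).supp
    have hr := res_ext hA
    refine ⟨⟨toSet n (extA n A), hg.1, ?_, hg.2⟩, ?_⟩
    · rw [transpose_iff, hp, sym_res (good_ext hA), hr]; exact hs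
    · apply Subtype.ext
      change res (pmem (toSet n (extA n A))) = A
      rw [hp, hr]

end CSSC

namespace CSSC

theorem low_of_units {A : ℕ → ℕ → ℕ → Prop} (hx : ∀ {x y z}, A (x+1) y z → A x y z)
    (hy : ∀ {x y z}, A x (y+1) z → x ≤ y → A x y z)
    (hz : ∀ {x y z}, A x y (z+1) → y ≤ z → A x y z)
    {x y z x' y' z' : ℕ} (h : A x y z) (h1 : x' ≤ x) (h2 : y' ≤ y) (h3 : z' ≤ z) (h4 : x' ≤ y') (h5 : y' ≤ z') :
    A x' y' z' := by
  have e1 : ∀ d x y z, A (x+d) y z → A x y z := by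
    intro d
    induction d with
    | zero => intro x y z h; exact h
    | succ d ih => intro x y z h; exact ih _ _ _ (hx h)
  have e2 : ∀ d x y z, x ≤ y → A x (y+d) z → A x y z := by
    intro d
    induction d with
    | zero => intro x y z _ h; exact h
    | succ d ih => intro x y z hxy h; exact ih _ _ _ hxy (hy h (by omega))
  have e3 : ∀ d x y z, y ≤ z → A x y (z+d) → A x y z := by
    intro d
    induction d with
    | zero => intro x y z _ h; exact h
    | succ d ih => intro x y z hxy h; exact ih _ _ _ hxy (hz h (by omega))
  obtain ⟨d1, rfl⟩ := Nat.exists_eq_add_of_le h1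
  obtain ⟨d2, rfl⟩ := Nat.exists_eq_add_of_le h2
  obtain ⟨d3, rfl⟩ := Nat.exists_eq_add_of_le h3
  exact e3 _ _ _ _ h5 (e2 _ _ _ _ h4 (e1 _ _ _ _ h))

theorem thresh {P : ℕ → Prop} (a : ℕ) (ha : ¬ P a) (hd : ∀ x x', P x → x' ≤ x → P x') :
    ∃ g, g ≤ a ∧ ∀ x, P x ↔ x < g := by
  classical
  have hex : ∃ x, ¬ P x := ⟨a, ha⟩
  refine ⟨Nat.find hex, Nat.find_min' hex ha, fun x => ?_⟩
  constructor
  · intro hp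
    by_contra hc
    exact Nat.find_spec hex (hd _ _ hp (by omega))
  · intro hlt
    have := Nat.find_min hex hlt
    tauto

structure CF (a : ℕ) (F : ℕ → ℕ → ℤ) : Prop where
  strict : ∀ {m m' s}, m < m' → m' < a → F m s < F m' s
  step : ∀ {m s}, m < a → s < 2*a → (F m (s+1) = F m s ∧ 0 ≤ F m s) ∨ F m (s+1) = F m s - 1
  lo0 : ∀ {m}, m < a → 0 ≤ F m 0
  hi0 : ∀ {m}, m < a → F m 0 < 2*a
  lon : ∀ {m}, m < a → 0 ≤ F m (2*a) + 2*a
  hin : ∀ {m}, m < a → F m (2*a) < 0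
  gl : ∀ {k l}, k < a → l < a → (F k 0 ≤ k + l ↔ (k:ℤ) + l < F l (2*a) + 2*a)

theorem CF.anti {a : ℕ} {F : ℕ → ℕ → ℤ} (h : CF a F) {m s d : ℕ} (hm : m < a) (hs : s + d ≤ 2*a) :
    F m (s+d) ≤ F m s := by
  induction d with
  | zero => simp
  | succ d ih =>
    have := ih (by omega)
    have := h.step hm (s := s+d) (by omega)
    rw [← add_assoc]; omega

theorem CF.lip {a : ℕ} {F : ℕ → ℕ → ℤ} (h : CF a F) {m s d : ℕ} (hm : m < a) (hs : s + d ≤ 2*a) :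
    F m s - d ≤ F m (s+d) := by
  induction d with
  | zero => simp
  | succ d ih =>
    have := ih (by omega)
    have := h.step hm (s := s+d) (by omega)
    rw [← add_assoc]; push_cast; omega

theorem CF.neg {a : ℕ} {F : ℕ → ℕ → ℤ} (h : CF a F) {m s d : ℕ} (hm : m < a) (hs : s + d ≤ 2*a) (hn : F m s < 0) :
    F m (s+d) = F m s - d := by
  induction d with
  | zero => simp
  | succ d ih =>
    have := ih (by omega)
    have := h.step hm (s := s+d) (by omega)
    rw [← add_assoc]; push_cast; omega

theorem CF.lb0 {a : ℕ} {F : ℕ → ℕ → ℤ} (h : CF a F) {m : ℕ} (hm : m < a) : (m:ℤ) ≤ F m 0 := by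
  induction m with
  | zero => exact h.lo0 hm
  | succ m ih =>
    have := ih (by omega)
    have := h.strict (s := 0) (show m < m+1 by omega) hm
    push_cast; omega

theorem CF.lb {a : ℕ} {F : ℕ → ℕ → ℤ} (h : CF a F) {m s : ℕ} (hm : m < a) (hs : s ≤ 2*a) : (m:ℤ) - s ≤ F m s := by
  have h1 := h.lb0 hm
  have h2 := h.lip (s := 0) (d := s) hm (by omega)
  rw [zero_add] at h2
  omega

theorem CF.ubn {a : ℕ} {F : ℕ → ℕ → ℤ} (h : CF a F) {d : ℕ} (hd : d < a) : F (a-1-d) (2*a) ≤ -1 - d := by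
  induction d with
  | zero =>
    have := h.hin (m := a-1-0) (by omega)
    push_cast; omega
  | succ d ih =>
    have := ih (by omega)
    have := h.strict (s := 2*a) (m := a-1-(d+1)) (m' := a-1-d) (by omega) (by omega)
    push_cast; omega

theorem CF.ub {a : ℕ} {F : ℕ → ℕ → ℤ} (h : CF a F) {m s : ℕ} (hm : m < a) (hs : s ≤ 2*a) : F m s ≤ a + m - s := by
  have h1 := h.ubn (d := a-1-m) (by omega)
  rw [show a-1-(a-1-m) = m by omega] at h1
  have h2 := h.lip (s := s) (d := 2*a-s) hm (by omega)
  rw [show s + (2*a-s) = 2*a by omega] at h2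
  omega

def AC (a : ℕ) (F : ℕ → ℕ → ℤ) (x y z : ℕ) : Prop :=
  x ≤ y ∧ y ≤ z ∧ z < 2*a ∧ (z < a ∨ F (z-a) (y-x) < (z:ℤ) - y)

theorem good_AC {a : ℕ} {F : ℕ → ℕ → ℤ} (h : CF a F) : GoodA (2*a) (AC a F) := by
  refine ⟨fun hm => ⟨hm.1, hm.2.1, hm.2.2.1⟩, fun hm => low_of_units ?_ ?_ ?_ hm, ?_⟩
  · rintro x y z ⟨h1, h2, h3, h4⟩
    refine ⟨by omega, h2, h3, ?_⟩
    rcases h4 with h4 | h4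
    · exact Or.inl h4
    · by_cases hza : z < a
      · exact Or.inl hza
      right
      have := h.anti (m := z-a) (s := y-(x+1)) (d := 1) (by omega) (by omega)
      rw [show y-(x+1)+1 = y-x by omega] at this
      omega
  · rintro x y z ⟨h1, h2, h3, h4⟩ h5
    refine ⟨by omega, by omega, h3, ?_⟩
    rcases h4 with h4 | h4
    · exact Or.inl h4
    · by_cases hza : z < a
      · exact Or.inl hza
      right
      have := h.lip (m := z-a) (s := y-x) (d := 1) (by omega) (by omega)
      rw [show y-x+1 = y+1-x by omega] at this
      push_cast at this h4
      omega
  · rintro x y z ⟨h1, h2, h3, h4⟩ h5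
    refine ⟨by omega, by omega, by omega, ?_⟩
    by_cases hza : z < a
    · exact Or.inl hza
    right
    rcases h4 with h4 | h4
    · omega
    have := h.strict (m := z-a) (m' := z+1-a) (s := y-x) (by omega) (by omega)
    push_cast at h4
    omega
  · intro x z hxz hz
    unfold AC
    by_cases hza : z < a
    · have e := h.lb (m := a-1-x) (s := z-x) (by omega) (by omega)
      rw [show 2*a-1-x-a = a-1-x by omega, show 2*a-1-x-(2*a-1-z) = z-x by omega]
      omega
    by_cases hxa : a ≤ x
    · have e := h.lb0 (m := z-a) (by omega)
      rw [show x - x = 0 by omega]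
      omega
    · have e := h.gl (k := z-a) (l := a-1-x) (by omega) (by omega)
      rw [show 2*a-1-x-a = a-1-x by omega, show 2*a-1-x-(2*a-1-z) = z-x by omega, show x-x=0 by omega]
      have h2 := h.lip (m := a-1-x) (s := z-x) (d := 2*a-(z-x)) (by omega) (by omega)
      have h3 := h.neg (m := a-1-x) (s := z-x) (d := 2*a-(z-x)) (by omega) (by omega)
      rw [show z-x+(2*a-(z-x)) = 2*a by omega] at h2 h3
      by_cases hn : F (a-1-x) (z-x) < 0
      · have := h3 hn
        omega
      · omega

theorem AC_inj {a : ℕ} {F F' : ℕ → ℕ → ℤ} (h : CF a F) (h' : CF a F') (e : AC a F = AC a F') :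
    ∀ {m s}, m < a → s ≤ 2*a → F m s = F' m s := by
  have thr : ∀ {F F' : ℕ → ℕ → ℤ}, CF a F → CF a F' → AC a F = AC a F' → ∀ {m s} (c : ℕ), m < a → s ≤ 2*a →
      F m s < c → F' m s < c := by
    intro F F' h h' e m s c hm hs hlt
    by_cases hc : a + m < c + s
    · have := h'.ub hm hs
      omega
    · have h1 : AC a F (a+m-c-s) (a+m-c) (a+m) := by
        refine ⟨by omega, by omega, by omega, Or.inr ?_⟩
        rw [show a+m-a = m by omega, show a+m-c-(a+m-c-s) = s by omega]
        omega
      rw [e] at h1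
      have h2 := h1.2.2.2
      rw [show a+m-a = m by omega, show a+m-c-(a+m-c-s) = s by omega] at h2
      omega
  intro m s hm hs
  induction s with
  | zero =>
    have p1 := h.lo0 hm
    have p2 := h'.lo0 hm
    have t1 := thr h h' e (F m 0 + 1).toNat hm hs
    have t2 := thr h' h e.symm (F' m 0 + 1).toNat hm hs
    omega
  | succ s ih =>
    have i := ih (by omega)
    have s1 := h.step hm (s := s) (by omega)
    have s2 := h'.step hm (s := s) (by omega)
    have t1 := thr h h' e (F m s).toNat hm hs
    have t2 := thr h' h e.symm (F m s).toNat hm hs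
    omega

theorem GoodA.not_of_ge {a : ℕ} {A : ℕ → ℕ → ℕ → Prop} (h : GoodA (2*a) A) {x y z : ℕ} (hx : a ≤ x) : ¬ A x y z := by
  intro hA
  obtain ⟨h1, h2, h3⟩ := h.supp hA
  have e1 : A x x x := h.low hA le_rfl h1 (by omega) le_rfl le_rfl
  have e2 := (h.gl le_rfl (by omega)).mp e1
  exact e2 (h.low e1 (by omega) (by omega) (by omega) (by omega) (by omega))

theorem GoodA.of_lt {a : ℕ} {A : ℕ → ℕ → ℕ → Prop} (h : GoodA (2*a) A) {x y z : ℕ} (h1 : x ≤ y) (h2 : y ≤ z) (hz : z < a) :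
    A x y z := by
  have e : A (a-1) (a-1) (a-1) := (h.gl le_rfl (by omega)).mpr (h.not_of_ge (by omega))
  exact h.low e (by omega) (by omega) (by omega) h1 h2

theorem AC_surj {a : ℕ} {A : ℕ → ℕ → ℕ → Prop} (h : GoodA (2*a) A) : ∃ F, CF a F ∧ AC a F = A := by
  have hg : ∀ m s, ∃ g, g ≤ a ∧ ∀ x, A x (min (x+s) (a+m)) (a+m) ↔ x < g := by
    intro m s
    apply thresh
    · exact h.not_of_ge le_rfl
    · intro x x' hA hx
      have := h.supp hA
      exact h.low hA hx (by omega) le_rfl (by omega) (by omega)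
  choose g hga hg using hg
  have gle : ∀ {p q : ℕ}, (∀ x, x < p → x < q) → p ≤ q := by
    intro p q hh
    by_contra hc
    exact absurd (hh q (by omega)) (by omega)
  have g_anti : ∀ m s, g m (s+1) ≤ g m s := by
    intro m s
    apply gle
    intro x hx
    have hb := hga m (s+1)
    have hxa : x < a := by omega
    rw [← hg] at hx ⊢
    exact h.low hx le_rfl (by omega) le_rfl (by omega) (by omega)
  have g_lip : ∀ m s, g m s ≤ g m (s+1) + 1 := by
    intro m s
    by_contra hc
    have hb := hga m s
    have h1 : g m (s+1) + 1 < g m s := by omega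
    rw [← hg] at h1
    have h2 : g m (s+1) < g m (s+1) := by
      rw [← hg m (s+1)]
      exact h.low h1 (by omega) (by omega) le_rfl (by omega) (by omega)
    omega
  have g_neg : ∀ m s, a + m < s + g m s → g m s ≤ g m (s+1) := by
    intro m s hlt
    by_contra hc
    have hb := hga m s
    have h1 : g m s - 1 < g m s := by omega
    rw [← hg] at h1
    have h2 : g m s - 1 < g m (s+1) := by
      rw [← hg m (s+1)]
      exact h.low h1 (by omega) (by omega) le_rfl (by omega) (by omega)
    omega
  have g_strict : ∀ m m' s, m < m' → g m' s ≤ g m s := by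
    intro m m' s hm
    apply gle
    intro x hx
    have hb := hga m' s
    have hxa : x < a := by omega
    rw [← hg] at hx ⊢
    exact h.low hx le_rfl (by omega) (by omega) (by omega) (by omega)
  refine ⟨fun m s => (a:ℤ) + m - s - g m s, ⟨?_, ?_, ?_, ?_, ?_, ?_, ?_⟩, ?_⟩
  · intro m m' s hm _
    have := g_strict m m' s hm
    omega
  · intro m s hm hs
    have h1 := g_anti m s
    have h2 := g_lip m s
    have h3 := g_neg m s
    push_cast
    omega
  · intro m hm
    have := hga m 0
    push_cast; omega
  · intro m hm
    push_cast; omega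
  · intro m hm
    have := hga m (2*a)
    push_cast; omega
  · intro m hm
    push_cast; omega
  · intro k l hk hl
    have h1 := hg k 0 (a-1-l)
    have h2 := hg l (2*a) (a-1-k)
    rw [show min (a-1-l+0) (a+k) = a-1-l by omega] at h1
    rw [show min (a-1-k+2*a) (a+l) = a+l by omega] at h2
    have h3 := h.gl (x := a-1-l) (z := a+k) (by omega) (by omega)
    rw [show 2*a-1-(a+k) = a-1-k by omega, show 2*a-1-(a-1-l) = a+l by omega, h1, h2] at h3
    have := hga k 0
    have := hga l (2*a)
    push_cast; omega
  · funext x y z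
    apply propext
    unfold AC
    constructor
    · rintro ⟨h1, h2, h3, h4⟩
      by_cases hz : z < a
      · exact h.of_lt h1 h2 hz
      have h5 := hg (z-a) (y-x) x
      rw [show min (x+(y-x)) (a+(z-a)) = y by omega, show a+(z-a) = z by omega] at h5
      rw [h5]
      rcases h4 with h4 | h4
      · omega
      push_cast [h1, show a ≤ z by omega] at h4
      omega
    · intro hA
      obtain ⟨h1, h2, h3⟩ := h.supp hA
      refine ⟨h1, h2, h3, ?_⟩
      by_cases hz : z < a
      · exact Or.inl hz
      right
      have h5 := hg (z-a) (y-x) x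
      rw [show min (x+(y-x)) (a+(z-a)) = y by omega, show a+(z-a) = z by omega] at h5
      rw [h5] at hA
      push_cast [h1, show a ≤ z by omega]
      omega

def ex {a : ℕ} (f : ℕ → Fin a → ℤ) (m s : ℕ) : ℤ := if h : m < a then f s ⟨m, h⟩ else 0

theorem ex_lt {a : ℕ} (f : ℕ → Fin a → ℤ) {m : ℕ} (h : m < a) (s : ℕ) : ex f m s = f s ⟨m, h⟩ := dif_pos h

def Fc {a : ℕ} (d : CData a) : ℕ → ℕ → ℤ := ex d.2.1

theorem Fc_CF {a : ℕ} (d : CData a) : CF a (Fc d) := by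
  obtain ⟨⟨⟨i, j⟩, hij⟩, f, h0, hT, hs, hst⟩ := d
  have e0 : ∀ {m} (hm : m < a), ex f m 0 = ((i ⟨m, hm⟩ : ℕ) : ℤ) := by
    intro m hm; rw [ex_lt _ hm, h0]
  have en : ∀ {m} (hm : m < a), ex f m (2*a) = ((j ⟨m, hm⟩ : ℕ) : ℤ) - (2*a : ℕ) := by
    intro m hm; rw [ex_lt _ hm, hT _ le_rfl]
  change CF a (ex f)
  refine ⟨?_, ?_, ?_, ?_, ?_, ?_, ?_⟩
  · intro m m' s h1 h2
    rw [ex_lt _ h2, ex_lt _ (h1.trans h2)]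
    exact hs s h1
  · intro m s hm hlt
    rw [ex_lt _ hm, ex_lt _ hm]
    rcases hst s hlt ⟨m, hm⟩ with h | h
    · exact Or.inl h
    · exact Or.inr h.1
  · intro m hm; rw [e0 hm]; omega
  · intro m hm; rw [e0 hm]; have := (i ⟨m, hm⟩).2; omega
  · intro m hm; rw [en hm]; push_cast; omega
  · intro m hm; rw [en hm]; have := (j ⟨m, hm⟩).2; omega
  · intro k l hk hl
    rw [e0 hk, en hl]
    have := glue i j hij ⟨k, hk⟩ ⟨l, hl⟩
    simp only at this
    push_cast; omega

theorem Fc_surj {a : ℕ} {F : ℕ → ℕ → ℤ} (h : CF a F) :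
    ∃ d : CData a, ∀ m s, m < a → s ≤ 2*a → Fc d m s = F m s := by
  have hi : StrictMono (fun k : Fin a => (⟨(F k 0).toNat, by
      have := h.hi0 k.2; have := h.lo0 k.2; omega⟩ : Fin (2*a))) := by
    intro k l hkl
    have := h.strict (s := 0) (show (k:ℕ) < l from hkl) l.2
    have := h.lo0 k.2
    rw [Fin.lt_def]
    simp only
    omega
  have hj : StrictMono (fun k : Fin a => (⟨(F k (2*a) + 2*a).toNat, by
      have := h.hin k.2; have := h.lon k.2; omega⟩ : Fin (2*a))) := by
    intro k l hkl
    have := h.strict (s := 2*a) (show (k:ℕ) < l from hkl) l.2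
    have := h.lon k.2
    rw [Fin.lt_def]
    simp only
    omega
  refine ⟨⟨⟨(OrderEmbedding.ofStrictMono _ hi, OrderEmbedding.ofStrictMono _ hj), ?_⟩,
    fun s k => F k (min s (2*a)), ?_, ?_, ?_, ?_⟩, ?_⟩
  · intro k l hkl
    have e := congrArg Fin.val hkl
    have h1 := h.lo0 k.2
    have h2 := h.lon l.2
    have h3 := h.gl k.2 l.2
    simp only [OrderEmbedding.coe_ofStrictMono] at e
    omega
  · funext k
    have h1 := h.lo0 k.2
    simp only [OrderEmbedding.coe_ofStrictMono]
    rw [show min 0 (2*a) = 0 by omega]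
    omega
  · intro s hs
    funext k
    have h1 := h.lon k.2
    simp only [OrderEmbedding.coe_ofStrictMono]
    rw [show min s (2*a) = 2*a by omega]
    push_cast
    omega
  · intro s k l hkl
    exact h.strict hkl l.2
  · intro s hs m
    simp only
    rw [show min s (2*a) = s by omega, show min (s+1) (2*a) = s+1 by omega]
    rcases h.step m.2 hs with h1 | h1
    · exact Or.inl h1
    · exact Or.inr ⟨h1, trivial⟩
  · intro m s hm hs
    unfold Fc
    rw [ex_lt _ hm]
    simp only
    rw [show min s (2*a) = s by omega]

theorem Fc_inj {a : ℕ} {d d' : CData a} (h : ∀ m s, m < a → s ≤ 2*a → Fc d m s = Fc d' m s) : d = d' := by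
  obtain ⟨⟨⟨i, j⟩, hij⟩, f, hf⟩ := d
  obtain ⟨⟨⟨i', j'⟩, hij'⟩, f', hf'⟩ := d'
  have key : ∀ s ≤ 2*a, f s = f' s := by
    intro s hs
    funext m
    have := h m s m.2 hs
    unfold Fc at this
    rw [ex_lt _ m.2, ex_lt _ m.2] at this
    exact this
  obtain rfl : i = i' := by
    ext k
    have e := key 0 (by omega)
    rw [hf.1, hf'.1] at e
    have := congrFun e k
    simp only at this
    omega
  obtain rfl : j = j' := by
    ext k
    have e := key (2*a) le_rfl
    rw [hf.2.1 _ le_rfl, hf'.2.1 _ le_rfl] at e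
    have := congrFun e k
    simp only at this
    omega
  obtain rfl : f = f' := by
    funext s
    rcases le_total s (2*a) with hs | hs
    · exact key s hs
    · rw [hf.2.1 _ hs, hf'.2.1 _ hs]
  rfl

theorem AC_congr {a : ℕ} {F F' : ℕ → ℕ → ℤ} (h : ∀ m s, m < a → s ≤ 2*a → F m s = F' m s) : AC a F = AC a F' := by
  funext x y z
  apply propext
  unfold AC
  refine and_congr_right fun h1 => and_congr_right fun h2 => and_congr_right fun h3 => ?_
  by_cases hz : z < a
  · simp [hz]
  · rw [h _ _ (by omega) (by omega)]

theorem card_goodC (a : ℕ) : Nat.card {A // GoodA (2*a) A} = Nat.card (CData a) := by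
  symm
  apply Nat.card_eq_of_bijective (fun d : CData a => ⟨AC a (Fc d), good_AC (Fc_CF d)⟩)
  constructor
  · intro d d' e
    apply Fc_inj
    intro m s hm hs
    exact AC_inj (Fc_CF d) (Fc_CF d') (congrArg Subtype.val e) hm hs
  · rintro ⟨A, hA⟩
    obtain ⟨F, hF, e⟩ := AC_surj hA
    obtain ⟨d, hd⟩ := Fc_surj hF
    refine ⟨d, Subtype.ext ?_⟩
    change AC a (Fc d) = A
    rw [← e]
    exact AC_congr hd

end CSSC

namespace CSSC

structure TF (a : ℕ) (F : ℕ → ℕ → ℤ) : Prop where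
  strict : ∀ {m m' s}, m < m' → m' < a → F m s < F m' s
  step : ∀ {m s}, m < a → s < a → F m (s+1) = F m s ∨ (F m (s+1) = F m s - 1 ∧ (s:ℤ) + 2 ≤ F m s)
  fin : ∀ {m}, m < a → F m a = m
  hi0 : ∀ {m}, m < a → F m 0 < 2*a

theorem TF.back {a : ℕ} {F : ℕ → ℕ → ℤ} (h : TF a F) {m d : ℕ} (hm : m < a) (hd : d ≤ a) :
    (m:ℤ) ≤ F m (a-d) ∧ F m (a-d) ≤ m + d ∧ (m ≤ a - d → F m (a-d) = m) := by
  induction d with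
  | zero => have := h.fin hm; simp [this]
  | succ d ih =>
    have := ih (by omega)
    have := h.step hm (s := a-(d+1)) (by omega)
    rw [show a-(d+1)+1 = a-d by omega] at this
    omega

theorem TF.lb {a : ℕ} {F : ℕ → ℕ → ℤ} (h : TF a F) {m s : ℕ} (hm : m < a) (hs : s ≤ a) : (m:ℤ) ≤ F m s := by
  have := (h.back hm (d := a-s) (by omega)).1
  rwa [show a-(a-s) = s by omega] at this

theorem TF.ub {a : ℕ} {F : ℕ → ℕ → ℤ} (h : TF a F) {m s : ℕ} (hm : m < a) (hs : s ≤ a) : F m s ≤ a + m - s := by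
  have := (h.back hm (d := a-s) (by omega)).2.1
  rw [show a-(a-s) = s by omega] at this
  omega

theorem TF.settle {a : ℕ} {F : ℕ → ℕ → ℤ} (h : TF a F) {m s : ℕ} (hm : m < a) (hs : s ≤ a) (hms : m ≤ s) : F m s = m := by
  have := (h.back hm (d := a-s) (by omega)).2.2 (by omega)
  rwa [show a-(a-s) = s by omega] at this

def BT (a : ℕ) (F : ℕ → ℕ → ℤ) (x y z : ℕ) : Prop := z < a ∨ F (z-a) (y-x) < (z:ℤ) - y

theorem BT_x {a : ℕ} {F : ℕ → ℕ → ℤ} (h : TF a F) {x y z : ℕ} (h1 : x + 1 ≤ y) (h2 : y < a) (h3 : z < 2*a)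
    (hB : BT a F (x+1) y z) : BT a F x y z := by
  by_cases hz : z < a
  · exact Or.inl hz
  rcases hB with hB | hB
  · exact Or.inl hB
  right
  have := h.step (m := z-a) (s := y-(x+1)) (by omega) (by omega)
  rw [show y-(x+1)+1 = y-x by omega] at this
  omega

theorem BT_y {a : ℕ} {F : ℕ → ℕ → ℤ} (h : TF a F) {x y z : ℕ} (h1 : x ≤ y) (h2 : y + 1 < a) (h3 : z < 2*a)
    (hB : BT a F x (y+1) z) : BT a F x y z := by
  by_cases hz : z < a
  · exact Or.inl hz
  rcases hB with hB | hB
  · exact Or.inl hB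
  right
  have := h.step (m := z-a) (s := y-x) (by omega) (by omega)
  rw [show y-x+1 = y+1-x by omega] at this
  push_cast at hB
  omega

theorem BT_z {a : ℕ} {F : ℕ → ℕ → ℤ} (h : TF a F) {x y z : ℕ} (h3 : z + 1 < 2*a)
    (hB : BT a F x y (z+1)) : BT a F x y z := by
  by_cases hz : z < a
  · exact Or.inl hz
  rcases hB with hB | hB
  · exact Or.inl (by omega)
  right
  have := h.strict (m := z-a) (m' := z+1-a) (s := y-x) (by omega) (by omega)
  push_cast at hB
  omega

def AT (a : ℕ) (F : ℕ → ℕ → ℤ) (x y z : ℕ) : Prop :=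
  x ≤ y ∧ y ≤ z ∧ z < 2*a ∧ ((y < a ∧ BT a F x y z) ∨ (a ≤ y ∧ ¬ BT a F (2*a-1-z) (2*a-1-y) (2*a-1-x)))

theorem sym_AT (a : ℕ) (F : ℕ → ℕ → ℤ) : SymA (2*a) (AT a F) := by
  intro x y z h1 h2 h3
  unfold AT
  rw [show 2*a-1-(2*a-1-x) = x by omega, show 2*a-1-(2*a-1-y) = y by omega, show 2*a-1-(2*a-1-z) = z by omega]
  by_cases hy : y < a
  · by_cases hB : BT a F x y z
    · refine iff_of_true ⟨h1, h2, h3, Or.inl ⟨hy, hB⟩⟩ ?_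
      rintro ⟨_, _, _, ⟨h4, _⟩ | ⟨_, h5⟩⟩
      · omega
      · exact h5 hB
    · refine iff_of_false ?_ ?_
      · rintro ⟨_, _, _, ⟨_, h4⟩ | ⟨h4, _⟩⟩
        · exact hB h4
        · omega
      · rw [not_not]; exact ⟨by omega, by omega, by omega, Or.inr ⟨by omega, hB⟩⟩
  · by_cases hB : BT a F (2*a-1-z) (2*a-1-y) (2*a-1-x)
    · refine iff_of_false ?_ ?_
      · rintro ⟨_, _, _, ⟨h4, _⟩ | ⟨_, h4⟩⟩
        · omega
        · exact h4 hB
      · rw [not_not]; exact ⟨by omega, by omega, by omega, Or.inl ⟨by omega, hB⟩⟩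
    · refine iff_of_true ⟨h1, h2, h3, Or.inr ⟨by omega, hB⟩⟩ ?_
      rintro ⟨_, _, _, ⟨_, h5⟩ | ⟨h4, _⟩⟩
      · exact hB h5
      · omega

theorem good_AT {a : ℕ} {F : ℕ → ℕ → ℤ} (h : TF a F) : GoodA (2*a) (AT a F) := by
  refine ⟨fun hm => ⟨hm.1, hm.2.1, hm.2.2.1⟩, fun hm => low_of_units ?_ ?_ ?_ hm, ?_⟩
  · rintro x y z ⟨h1, h2, h3, h4⟩
    refine ⟨by omega, h2, h3, ?_⟩
    rcases h4 with ⟨h4, hB⟩ | ⟨h4, hB⟩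
    · exact Or.inl ⟨h4, BT_x h h1 h4 h3 hB⟩
    · refine Or.inr ⟨h4, fun hc => hB ?_⟩
      apply BT_z h (by omega)
      rwa [show 2*a-1-(x+1)+1 = 2*a-1-x by omega]
  · rintro x y z ⟨h1, h2, h3, h4⟩ h5
    refine ⟨by omega, by omega, h3, ?_⟩
    rcases h4 with ⟨h4, hB⟩ | ⟨h4, hB⟩
    · exact Or.inl ⟨by omega, BT_y h h5 h4 h3 hB⟩
    · by_cases hy : a ≤ y
      · refine Or.inr ⟨hy, fun hc => hB ?_⟩
        apply BT_y h (by omega) (by omega) (by omega)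
        rwa [show 2*a-1-(y+1)+1 = 2*a-1-y by omega]
      · left
        refine ⟨by omega, Or.inr ?_⟩
        unfold BT at hB
        rw [show 2*a-1-(y+1)-(2*a-1-z) = z-a by omega, show 2*a-1-x-a = a-1-x by omega] at hB
        by_cases hc : a-1-x ≤ z-a
        · have := h.settle (m := a-1-x) (s := z-a) (by omega) (by omega) hc
          omega
        · have := h.settle (m := z-a) (s := y-x) (by omega) (by omega) (by omega)
          omega
  · rintro x y z ⟨h1, h2, h3, h4⟩ h5
    refine ⟨by omega, by omega, by omega, ?_⟩
    rcases h4 with ⟨h4, hB⟩ | ⟨h4, hB⟩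
    · exact Or.inl ⟨h4, BT_z h h3 hB⟩
    · refine Or.inr ⟨h4, fun hc => hB ?_⟩
      apply BT_x h (by omega) (by omega) (by omega)
      rwa [show 2*a-1-(z+1)+1 = 2*a-1-z by omega]
  · intro x z hxz hz
    exact sym_AT a F le_rfl hxz hz

theorem AT_inj {a : ℕ} {F F' : ℕ → ℕ → ℤ} (h : TF a F) (h' : TF a F') (e : AT a F = AT a F') :
    ∀ {m s}, m < a → s ≤ a → F m s = F' m s := by
  have thr : ∀ {F F' : ℕ → ℕ → ℤ}, TF a F → TF a F' → AT a F = AT a F' → ∀ {m s} (c : ℕ), m < a → s ≤ a →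
      F m s < c → F' m s < c := by
    intro F F' h h' e m s c hm hs hlt
    by_cases hc : a + m < c + s
    · have := h'.ub hm hs
      omega
    · have h0 := h.lb hm hs
      have h1 : AT a F (a+m-c-s) (a+m-c) (a+m) := by
        refine ⟨by omega, by omega, by omega, Or.inl ⟨by omega, Or.inr ?_⟩⟩
        rw [show a+m-a = m by omega, show a+m-c-(a+m-c-s) = s by omega]
        omega
      rw [e] at h1
      rcases h1.2.2.2 with ⟨_, h2⟩ | ⟨h2, _⟩
      · unfold BT at h2
        rw [show a+m-a = m by omega, show a+m-c-(a+m-c-s) = s by omega] at h2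
        omega
      · omega
  intro m s hm hs
  have p1 := h.lb hm hs
  have p2 := h'.lb hm hs
  have t1 := thr h h' e (F m s + 1).toNat hm hs
  have t2 := thr h' h e.symm (F' m s + 1).toNat hm hs
  omega

theorem AT_surj {a : ℕ} {A : ℕ → ℕ → ℕ → Prop} (h : GoodA (2*a) A) (hs : SymA (2*a) A) :
    ∃ F, TF a F ∧ AT a F = A := by
  have forced : ∀ {x y z}, x ≤ y → y ≤ z → z < 2*a → y < a → x + z < 2*a → A x y z := by
    intro x y z h1 h2 h3 h4 h5
    rw [hs h1 h2 h3]
    intro hA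
    have hA' : A x y z := h.low hA (by omega) (by omega) (by omega) h1 h2
    exact (hs h1 h2 h3).mp hA' hA
  have hg : ∀ m s, ∃ g, g ≤ a - s ∧ ∀ x, (x + s < a ∧ A x (x+s) (a+m)) ↔ x < g := by
    intro m s
    apply thresh (P := fun x => x + s < a ∧ A x (x+s) (a+m))
    · rintro ⟨h1, _⟩; omega
    · rintro x x' ⟨h1, hA⟩ hx
      exact ⟨by omega, h.low hA hx (by omega) le_rfl (by omega) (by omega)⟩
  choose g hga hg using hg
  have gle : ∀ {p q : ℕ}, (∀ x, x < p → x < q) → p ≤ q := by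
    intro p q hh
    by_contra hc
    exact absurd (hh q (by omega)) (by omega)
  have g_anti : ∀ m s, g m (s+1) ≤ g m s := by
    intro m s
    apply gle
    intro x hx
    rw [← hg] at hx ⊢
    exact ⟨by omega, h.low hx.2 le_rfl (by omega) le_rfl (by omega) (by omega)⟩
  have g_lip : ∀ m s, g m s ≤ g m (s+1) + 1 := by
    intro m s
    by_contra hc
    have h1 : g m (s+1) + 1 < g m s := by omega
    rw [← hg] at h1
    have h2 : g m (s+1) < g m (s+1) := by
      rw [← hg m (s+1)]
      exact ⟨by omega, h.low h1.2 (by omega) (by omega) le_rfl (by omega) (by omega)⟩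
    omega
  have g_set : ∀ m s, m < a → s < a → m ≤ s → a ≤ g m s + s := by
    intro m s hm hsa hms
    have h2 : a - s - 1 < g m s := by
      rw [← hg]
      exact ⟨by omega, forced (by omega) (by omega) (by omega) (by omega) (by omega)⟩
    omega
  have g_strict : ∀ m m' s, m < m' → g m' s ≤ g m s := by
    intro m m' s hm
    apply gle
    intro x hx
    rw [← hg] at hx ⊢
    exact ⟨by omega, h.low hx.2 le_rfl le_rfl (by omega) (by omega) (by omega)⟩
  have hF : ∃ F : ℕ → ℕ → ℤ, ∀ m s, F m s = (a:ℤ) + m - s - g m s := ⟨fun m s => (a:ℤ) + m - s - g m s, fun _ _ => rfl⟩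
  obtain ⟨F, hF⟩ := hF
  have keyB : ∀ {x y z}, x ≤ y → y ≤ z → z < 2*a → y < a → (BT a F x y z ↔ A x y z) := by
    intro x y z h1 h2 h3 hy
    unfold BT
    by_cases hz : z < a
    · simp only [hz, true_or, true_iff]
      exact forced h1 h2 h3 hy (by omega)
    · have h5 := hg (z-a) (y-x) x
      rw [show x+(y-x) = y by omega, show a+(z-a) = z by omega] at h5
      have h6 : A x y z ↔ x < g (z-a) (y-x) := by
        rw [← h5]; simp [hy]
      rw [h6, hF]
      omega
  refine ⟨F, ⟨?_, ?_, ?_, ?_⟩, ?_⟩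
  · intro m m' s hm _
    have := g_strict m m' s hm
    rw [hF, hF]
    omega
  · intro m s hm hsa
    have h1 := g_anti m s
    have h2 := g_lip m s
    have h3 := g_set m s hm hsa
    have h4 := hga m (s+1)
    rw [hF, hF]
    push_cast
    omega
  · intro m hm
    have := hga m a
    rw [hF]
    omega
  · intro m hm
    rw [hF]
    push_cast; omega
  · funext x y z
    apply propext
    unfold AT
    constructor
    · rintro ⟨h1, h2, h3, ⟨h4, hB⟩ | ⟨h4, hB⟩⟩
      · exact (keyB h1 h2 h3 h4).mp hB
      · rw [keyB (by omega) (by omega) (by omega) (by omega)] at hB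
        exact (hs h1 h2 h3).mpr hB
    · intro hA
      obtain ⟨h1, h2, h3⟩ := h.supp hA
      refine ⟨h1, h2, h3, ?_⟩
      by_cases hy : y < a
      · exact Or.inl ⟨hy, (keyB h1 h2 h3 hy).mpr hA⟩
      · refine Or.inr ⟨by omega, ?_⟩
        rw [keyB (by omega) (by omega) (by omega) (by omega)]
        exact (hs h1 h2 h3).mp hA

def Ft {a : ℕ} (d : TData a) : ℕ → ℕ → ℤ := ex d.2.1

theorem Ft_TF {a : ℕ} (d : TData a) : TF a (Ft d) := by
  obtain ⟨i, f, h0, hT, hs, hst⟩ := d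
  change TF a (ex f)
  refine ⟨?_, ?_, ?_, ?_⟩
  · intro m m' s h1 h2
    rw [ex_lt _ h2, ex_lt _ (h1.trans h2)]
    exact hs s h1
  · intro m s hm hlt
    rw [ex_lt _ hm, ex_lt _ hm]
    rcases hst s hlt ⟨m, hm⟩ with h | h
    · exact Or.inl h.1
    · refine Or.inr ⟨h.1, ?_⟩
      have := h.2
      unfold βt at this
      push_cast at this
      omega
  · intro m hm; rw [ex_lt _ hm, hT _ le_rfl]
  · intro m hm; rw [ex_lt _ hm, h0]; have := (i ⟨m, hm⟩).2; simp only; omega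

theorem Ft_surj {a : ℕ} {F : ℕ → ℕ → ℤ} (h : TF a F) :
    ∃ d : TData a, ∀ m s, m < a → s ≤ a → Ft d m s = F m s := by
  have hi : StrictMono (fun k : Fin a => (⟨(F k 0).toNat, by
      have := h.hi0 k.2; have := k.2; omega⟩ : Fin (2*a))) := by
    intro k l hkl
    have := h.strict (s := 0) (show (k:ℕ) < l from hkl) l.2
    have := h.lb (s := 0) k.2 (by omega)
    rw [Fin.lt_def]
    simp only
    omega
  refine ⟨⟨OrderEmbedding.ofStrictMono _ hi, fun s k => F k (min s a), ?_, ?_, ?_, ?_⟩, ?_⟩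
  · funext k
    have h1 := h.lb (s := 0) k.2 (by omega)
    simp only [OrderEmbedding.coe_ofStrictMono]
    rw [show min 0 a = 0 by omega]
    omega
  · intro s hs
    funext k
    simp only
    rw [show min s a = a by omega, h.fin k.2]
  · intro s k l hkl
    exact h.strict hkl l.2
  · intro s hs m
    simp only
    rw [show min s a = s by omega, show min (s+1) a = s+1 by omega]
    rcases h.step m.2 hs with h1 | h1
    · exact Or.inl ⟨h1, trivial⟩
    · refine Or.inr ⟨h1.1, ?_⟩
      have := h1.2
      unfold βt
      push_cast
      omega
  · intro m s hm hs
    unfold Ft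
    rw [ex_lt _ hm]
    simp only
    rw [show min s a = s by omega]

theorem Ft_inj {a : ℕ} {d d' : TData a} (h : ∀ m s, m < a → s ≤ a → Ft d m s = Ft d' m s) : d = d' := by
  obtain ⟨i, f, hf⟩ := d
  obtain ⟨i', f', hf'⟩ := d'
  have key : ∀ s ≤ a, f s = f' s := by
    intro s hs
    funext m
    have := h m s m.2 hs
    unfold Ft at this
    rw [ex_lt _ m.2, ex_lt _ m.2] at this
    exact this
  obtain rfl : i = i' := by
    ext k
    have e := key 0 (by omega)
    rw [hf.1, hf'.1] at e
    have := congrFun e k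
    omega
  obtain rfl : f = f' := by
    funext s
    rcases le_total s a with hs | hs
    · exact key s hs
    · rw [hf.2.1 _ hs, hf'.2.1 _ hs]
  rfl

theorem AT_congr {a : ℕ} {F F' : ℕ → ℕ → ℤ} (h : ∀ m s, m < a → s ≤ a → F m s = F' m s) : AT a F = AT a F' := by
  have hB : ∀ {x y z}, z < 2*a → y < a → (BT a F x y z ↔ BT a F' x y z) := by
    intro x y z h1 h2
    unfold BT
    by_cases hz : z < a
    · simp [hz]
    · rw [h _ _ (by omega) (by omega)]
  funext x y z
  apply propext
  unfold AT
  refine and_congr_right fun h1 => and_congr_right fun h2 => and_congr_right fun h3 => or_congr ?_ ?_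
  · exact and_congr_right fun h4 => hB h3 h4
  · exact and_congr_right fun h4 => not_congr (hB (by omega) (by omega))

theorem card_goodT (a : ℕ) : Nat.card {A // GoodA (2*a) A ∧ SymA (2*a) A} = Nat.card (TData a) := by
  symm
  apply Nat.card_eq_of_bijective (fun d : TData a => ⟨AT a (Ft d), good_AT (Ft_TF d), sym_AT a _⟩)
  constructor
  · intro d d' e
    apply Ft_inj
    intro m s hm hs
    exact AT_inj (Ft_TF d) (Ft_TF d') (congrArg Subtype.val e) hm hs
  · rintro ⟨A, hA, hA'⟩
    obtain ⟨F, hF, e⟩ := AT_surj hA hA'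
    obtain ⟨d, hd⟩ := Ft_surj hF
    refine ⟨d, Subtype.ext ?_⟩
    change AT a (Ft d) = A
    rw [← e]
    exact AT_congr hd

end CSSC

/-- Equation (1.4): `CSSC(2a,2a,2a) = TSSC(2a,2a,2a)²`.
Plane partitions in the box are identified with lower sets of
`{0,…,2a−1}³` with the (componentwise) product order.  A lower set is totally symmetric
iff it is both symmetric (equal to its transpose) and cyclically symmetric. -/
theorem cssc_eq_tssc_sq (a : ℕ) :
    Nat.card {T : Set (Fin (2 * a) × Fin (2 * a) × Fin (2 * a)) //
        IsLowerSet T ∧ ppCycle T = T ∧ ppComplement T = T}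
      = Nat.card {T : Set (Fin (2 * a) × Fin (2 * a) × Fin (2 * a)) //
          IsLowerSet T ∧ ppTranspose T = T ∧ ppCycle T = T ∧ ppComplement T = T} ^ 2 := by
  rw [CSSC.card_C, CSSC.card_T, CSSC.card_goodC, CSSC.card_goodT, CSSC.card_main]
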